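/- arXiv:2011.01610 — 5 statements merged into one kernel-verified Lean document; each statement's English description precedes it below -/
import Mathlib

section
/- Let β > 1 and f_β(x) = C_β/(1+x²)^β be the Cauchy-type density on ℝ. For every α with 1 < α < β and every smooth probability density f on ℝ that is absolutely continuous with respect to f_β, the relative-entropy form of the weighted logarithmic Sobolev inequality holds: ∫_ℝ f(x) log(f(x)/f_β(x)) dx ≤ (1/(2ρ_{β,α})) ∫_ℝ (1+x²)^α (d/dx log(f(x)/f_β(x)))² f(x) dx, where ρ_{β,α} = (2β − α)((α−1)/(2−α))^{3−2α} for 1 < α < 3/2 and ρ_{β,α} = 2β − α for 3/2 ≤ α < β. -/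
open MeasureTheory Set

/-! A weighted Fisher information `∫ w² (log (f/q))'² f` is the Fisher information of `f` relative
to `q` in the metric `dx² / w²`, so the inequality is a logarithmic Sobolev inequality under a
Bakry–Émery condition: the potential of `q` is `ρ`-convex in the arc length coordinate `Y`. Let
`T` be the monotone transport of `f` to `q`. Since `log r ≤ r - 1` for its Jacobian `r` in arc
length, convexity of the potential along the displacement `Y ∘ T - Y` and Young's inequality bound
`f log (f/q)` by the Fisher density over `2ρ` plus the derivative of the flux `f w (Y ∘ T - Y)`.
When `1/w` is integrable, `Y` is bounded, and since `f` is integrable, the flux is along suitable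
sequences at most `ε` at `∞` and at least `-ε` at `-∞`. Densities with zeros are mixed with a
small share of `q`, and Fatou's lemma removes the mixture. For the Cauchy-type densities the
Bakry–Émery condition is Bernoulli's inequality if `α ≥ 3/2` and a weighted AM–GM inequality if
`α < 3/2`. -/

open Filter Topology InformationTheory

namespace WeightedLogSobolev

section Cumulative

variable {g : ℝ → ℝ}

/-- The distribution function of the density `g`. For `g = w⁻¹` it is the arc length coordinate of
the metric `dx² / w²`, measured from `-∞`. -/
noncomputable def cumulative (g : ℝ → ℝ) (x : ℝ) : ℝ := ∫ t in Iic x, g t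

lemma hasStrictDerivAt_cumulative (hc : Continuous g) (hi : Integrable g) (x : ℝ) :
    HasStrictDerivAt (cumulative g) (g x) x := by
  have hsplit : cumulative g = fun x => (∫ t in Iic (0 : ℝ), g t) + ∫ t in (0 : ℝ)..x, g t := by
    funext x
    rw [← intervalIntegral.integral_Iic_sub_Iic hi.integrableOn hi.integrableOn,
      add_sub_cancel, cumulative]
  rw [hsplit]
  exact (intervalIntegral.integral_hasStrictDerivAt_right (hc.intervalIntegrable _ _)
    (hc.stronglyMeasurableAtFilter _ _) hc.continuousAt).const_add _

lemma strictMono_cumulative (hc : Continuous g) (hi : Integrable g) (hpos : ∀ x, 0 < g x) :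
    StrictMono (cumulative g) :=
  strictMono_of_hasDerivAt_pos (fun x => (hasStrictDerivAt_cumulative hc hi x).hasDerivAt) hpos

lemma tendsto_cumulative_atBot : Tendsto (cumulative g) atBot (𝓝 0) :=
  tendsto_integral_Iic_zero tendsto_id

lemma tendsto_cumulative_atTop (hi : Integrable g) :
    Tendsto (cumulative g) atTop (𝓝 (∫ x, g x)) :=
  (aecover_Iic tendsto_id).integral_tendsto_of_countably_generated hi

lemma cumulative_pos (hc : Continuous g) (hi : Integrable g) (hpos : ∀ x, 0 < g x) (x : ℝ) :
    0 < cumulative g x :=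
  have hmono := strictMono_cumulative hc hi hpos
  (hmono.monotone.le_of_tendsto tendsto_cumulative_atBot (x - 1)).trans_lt
    (hmono (sub_one_lt x))

lemma cumulative_lt_integral (hc : Continuous g) (hi : Integrable g) (hpos : ∀ x, 0 < g x)
    (x : ℝ) : cumulative g x < ∫ t, g t :=
  have hmono := strictMono_cumulative hc hi hpos
  (hmono (lt_add_one x)).trans_le
    (hmono.monotone.ge_of_tendsto (tendsto_cumulative_atTop hi) (x + 1))

lemma exists_cumulative_eq (hc : Continuous g) (hi : Integrable g) {y : ℝ} (hy0 : 0 < y)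
    (hy1 : y < ∫ t, g t) : ∃ x, cumulative g x = y := by
  have hcont : Continuous (cumulative g) := continuous_iff_continuousAt.2 fun x =>
    (hasStrictDerivAt_cumulative hc hi x).hasDerivAt.continuousAt
  obtain ⟨a, ha⟩ := (tendsto_cumulative_atBot.eventually_lt_const hy0).exists
  obtain ⟨b, hb⟩ := ((tendsto_cumulative_atTop hi).eventually_const_lt hy1).exists
  exact mem_range_of_exists_le_of_exists_ge hcont ⟨a, ha.le⟩ ⟨b, hb.le⟩

lemma exists_transport {f q : ℝ → ℝ} (hfc : Continuous f) (hfi : Integrable f)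
    (hfpos : ∀ x, 0 < f x) (hqc : Continuous q) (hqi : Integrable q) (hqpos : ∀ x, 0 < q x)
    (hmass : ∫ x, f x = ∫ x, q x) :
    ∃ T : ℝ → ℝ, ∀ x, HasDerivAt T (f x / q (T x)) x := by
  have hpre (x : ℝ) : ∃ z, cumulative q z = cumulative f x :=
    exists_cumulative_eq hqc hqi (cumulative_pos hfc hfi hfpos x)
      (hmass ▸ cumulative_lt_integral hfc hfi hfpos x)
  have hinv : Function.LeftInverse (Function.invFun (cumulative q)) (cumulative q) :=
    Function.leftInverse_invFun (strictMono_cumulative hqc hqi hqpos).injective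
  refine ⟨fun x => Function.invFun (cumulative q) (cumulative f x), fun x => ?_⟩
  obtain ⟨z, hz⟩ := hpre x
  have hinv_deriv : HasDerivAt (Function.invFun (cumulative q)) (q z)⁻¹ (cumulative f x) :=
    hz ▸ ((hasStrictDerivAt_cumulative hqc hqi z).to_local_left_inverse (hqpos z).ne'
      (Eventually.of_forall hinv)).hasDerivAt
  have hTx : Function.invFun (cumulative q) (cumulative f x) = z := by rw [← hz, hinv]
  simp only [hTx, div_eq_inv_mul]
  exact hinv_deriv.comp x (hasStrictDerivAt_cumulative hfc hfi x).hasDerivAt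

end Cumulative

section Calculus

lemma quadratic_le_sub_of_monotone {U Y p Y' : ℝ → ℝ} {ρ : ℝ}
    (hU : ∀ x, HasDerivAt U (Y' x * p x) x) (hY : ∀ x, HasDerivAt Y (Y' x) x)
    (hY' : ∀ x, 0 ≤ Y' x) (hmono : Monotone fun x => p x - ρ * Y x) (x z : ℝ) :
    p x * (Y z - Y x) + ρ / 2 * (Y z - Y x) ^ 2 ≤ U z - U x := by
  set D : ℝ → ℝ := fun t => U t - (p x * (Y t - Y x) + ρ / 2 * (Y t - Y x) ^ 2) with hD
  have hDd (t : ℝ) : HasDerivAt D (Y' t * ((p t - ρ * Y t) - (p x - ρ * Y x))) t := by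
    have hYx := (hY t).sub_const (Y x)
    refine ((hU t).sub ((hYx.const_mul (p x)).add ((hYx.fun_pow 2).const_mul (ρ / 2)))).congr_deriv
      ?_
    push_cast
    ring
  have hDdiff : Differentiable ℝ D := fun t => (hDd t).differentiableAt
  have hmin : D x ≤ D z := isMinOn_univ_of_deriv hDdiff.continuous.continuousAt
    hDdiff.differentiableOn hDdiff.differentiableOn
    (fun t ht => (hDd t).deriv ▸
      mul_nonpos_of_nonneg_of_nonpos (hY' t) (sub_nonpos.2 (hmono (le_of_lt ht))))
    (fun t ht => (hDd t).deriv ▸ mul_nonneg (hY' t) (sub_nonneg.2 (hmono (le_of_lt ht))))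
    (mem_univ z)
  simp only [hD, sub_self] at hmin
  linarith

/- Otherwise `(log |Y - L|)'` would be dominated by `f` near `l`, although `log |Y - L| → -∞`. -/
lemma frequently_mul_abs_sub_lt_of_integrable {l : Filter ℝ} [NeBot l] [TendstoIxxClass Icc l l]
    {f Y Y' : ℝ → ℝ} {L ε : ℝ} (hf : Integrable f) (hY : ∀ x, HasDerivAt Y (Y' x) x)
    (hL : Tendsto Y l (𝓝 L)) (hne : ∀ x, Y x ≠ L) (hε : 0 < ε) :
    ∃ᶠ x in l, f x * |Y x - L| < ε * |Y' x| := by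
  intro hlt
  have hlog (x : ℝ) : HasDerivAt (fun x => Real.log (Y x - L)) (Y' x / (Y x - L)) x :=
    ((hY x).sub_const L).log (sub_ne_zero.2 (hne x))
  have hlim : Tendsto (fun x => Y x - L) l (𝓝[≠] 0) :=
    tendsto_nhdsWithin_iff.2 ⟨by simpa using hL.sub_const L,
      Eventually.of_forall fun x => sub_ne_zero.2 (hne x)⟩
  refine not_integrableOn_of_tendsto_norm_atTop_of_deriv_isBigO_filter (g := f) l univ_mem
    (Eventually.of_forall fun x => (hlog x).differentiableAt)
    (tendsto_abs_atBot_atTop.comp (Real.tendsto_log_nhdsNE_zero.comp hlim)) ?_ hf.integrableOn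
  refine Asymptotics.IsBigO.of_bound ε⁻¹ (hlt.mono fun x hx => ?_)
  have hpos : 0 < |Y x - L| := abs_pos.2 (sub_ne_zero.2 (hne x))
  rw [(hlog x).deriv, Real.norm_eq_abs, abs_div, div_le_iff₀ hpos, inv_mul_eq_div,
    div_mul_eq_mul_div, le_div_iff₀ hε, mul_comm]
  exact (not_lt.1 hx).trans (mul_le_mul_of_nonneg_right (le_abs_self _) hpos.le)

end Calculus

section Fatou

lemma integrable_and_integral_le_of_tendsto {ι X : Type*} [MeasurableSpace X] {μ : Measure X}
    {u : Filter ι} [NeBot u] [IsCountablyGenerated u] {E : ι → X → ℝ} {E₀ : X → ℝ} {c : ι → ℝ}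
    {c₀ : ℝ} (hint : ∀ i, Integrable (E i) μ) (hnonneg : ∀ i, 0 ≤ E i)
    (hE : ∀ᵐ x ∂μ, Tendsto (fun i => E i x) u (𝓝 (E₀ x)))
    (hle : ∀ᶠ i in u, ∫ x, E i x ∂μ ≤ c i) (hc : Tendsto c u (𝓝 c₀)) :
    Integrable E₀ μ ∧ ∫ x, E₀ x ∂μ ≤ c₀ := by
  have hE₀ : 0 ≤ᵐ[μ] E₀ := hE.mono fun x hx => ge_of_tendsto' hx fun i => hnonneg i x
  have hmeas : AEStronglyMeasurable E₀ μ :=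
    aestronglyMeasurable_of_tendsto_ae u (fun i => (hint i).aestronglyMeasurable) hE
  have hc₀ : 0 ≤ c₀ := ge_of_tendsto hc (hle.mono fun i hi =>
    (integral_nonneg (hnonneg i)).trans hi)
  have hfatou : ∫⁻ x, ENNReal.ofReal (E₀ x) ∂μ ≤ ENNReal.ofReal c₀ := calc
    _ = ∫⁻ x, liminf (fun i => ENNReal.ofReal (E i x)) u ∂μ :=
      lintegral_congr_ae (hE.mono fun x hx => (ENNReal.tendsto_ofReal hx).liminf_eq.symm)
    _ ≤ liminf (fun i => ∫⁻ x, ENNReal.ofReal (E i x) ∂μ) u :=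
      lintegral_liminf_le' fun i => (hint i).aemeasurable.ennreal_ofReal
    _ ≤ liminf (fun i => ENNReal.ofReal (c i)) u := liminf_le_liminf (hle.mono fun i hi => by
      rw [← ofReal_integral_eq_lintegral_ofReal (hint i) (Eventually.of_forall (hnonneg i))]
      exact ENNReal.ofReal_le_ofReal hi)
    _ = ENNReal.ofReal c₀ := (ENNReal.tendsto_ofReal hc).liminf_eq
  refine ⟨⟨hmeas, ?_⟩, ?_⟩
  · rw [hasFiniteIntegral_iff_ofReal hE₀]
    exact hfatou.trans_lt ENNReal.ofReal_lt_top
  · rw [integral_eq_lintegral_of_nonneg_ae hE₀ hmeas]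
    exact ENNReal.toReal_le_of_le_ofReal hc₀ hfatou

lemma integrable_and_integral_le_of_sub_le_deriv {E R G G' : ℝ → ℝ} (hE : Continuous E)
    (hE0 : 0 ≤ E) (hR : Integrable R) (hG : ∀ x, HasDerivAt G (G' x) x)
    (hle : ∀ x, E x - R x ≤ G' x) (htop : ∀ ε > 0, ∃ᶠ x in atTop, G x < ε)
    (hbot : ∀ ε > 0, ∃ᶠ x in atBot, -ε < G x) :
    Integrable E ∧ ∫ x, E x ≤ ∫ x, R x := by
  suffices h : ∀ ε > 0, Integrable E ∧ ∫ x, E x ≤ (∫ x, R x) + 2 * ε from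
    ⟨(h 1 one_pos).1, le_of_forall_pos_le_add fun ε hε => by linarith [(h (ε / 2) (half_pos hε)).2]⟩
  intro ε hε
  obtain ⟨b, hb, hGb⟩ := exists_seq_forall_of_frequently (htop ε hε)
  obtain ⟨a, ha, hGa⟩ := exists_seq_forall_of_frequently (hbot ε hε)
  have hIoc (n : ℕ) : IntegrableOn E (Ioc (a n) (b n)) :=
    hE.integrableOn_Ioc
  refine integrable_and_integral_le_of_tendsto
    (E := fun n => (Ioc (a n) (b n)).indicator E)
    (fun n => (integrable_indicator_iff measurableSet_Ioc).2 (hIoc n))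
    (fun n => indicator_nonneg fun x _ => hE0 x) ((aecover_Ioc ha hb).ae_tendsto_indicator E)
    ?_ ((intervalIntegral_tendsto_integral hR ha hb).add_const (2 * ε))
  filter_upwards [ha.eventually (eventually_le_atBot 0),
    hb.eventually (eventually_ge_atTop 0)] with n ha0 hb0
  have hab : a n ≤ b n := ha0.trans hb0
  have hftc : ∫ x in a n..b n, (E x - R x) ≤ G (b n) - G (a n) :=
    intervalIntegral.integral_le_sub_of_hasDeriv_right_of_le hab
      (fun x _ => (hG x).continuousAt.continuousWithinAt) (fun x _ => (hG x).hasDerivWithinAt)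
      (hE.integrableOn_Icc.sub hR.integrableOn) fun x _ => hle x
  rw [intervalIntegral.integral_sub (hE.intervalIntegrable _ _) hR.intervalIntegrable] at hftc
  rw [integral_indicator measurableSet_Ioc, ← intervalIntegral.integral_of_le hab]
  linarith [hGa n, hGb n]

end Fatou

section PositiveDensity

variable {w q f : ℝ → ℝ} {ρ : ℝ}

/-- An everywhere positive differentiable probability density on `ℝ`. -/
structure IsPositiveDensity (f : ℝ → ℝ) : Prop where
  differentiable : Differentiable ℝ f
  pos : ∀ x, 0 < f x
  integral_eq_one : ∫ x, f x = 1

lemma IsPositiveDensity.integrable (hf : IsPositiveDensity f) : Integrable f :=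
  integrable_of_integral_eq_one hf.integral_eq_one

/-- A positive differentiable weight `w` such that `ℝ` has finite length in the metric
`dx² / w²`. -/
structure IsFiniteLengthWeight (w : ℝ → ℝ) : Prop where
  differentiable : Differentiable ℝ w
  pos : ∀ x, 0 < w x
  integrable_inv : Integrable w⁻¹

/-- The potential of the measure `q dx` with respect to the length measure `dx / w` of the metric
`dx² / w²`. -/
noncomputable def potential (w q : ℝ → ℝ) (x : ℝ) : ℝ := -Real.log (w x * q x)

/-- The Bakry–Émery condition `CD(ρ, ∞)` for the measure `q dx` on `ℝ` with the metric `dx² / w²`.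
Since `w d/dx` is the derivative in the arc length coordinate, it says that the potential is
`ρ`-convex in that coordinate. -/
def CurvatureBound (w q : ℝ → ℝ) (ρ : ℝ) : Prop :=
  Monotone fun x => w x * deriv (potential w q) x - ρ * cumulative w⁻¹ x

/-- The pointwise relative entropy of `f` with respect to `q`, normalized to be nonnegative: it is
`f log (f / q) + q - f`. -/
noncomputable def entropyDensity (q f : ℝ → ℝ) (x : ℝ) : ℝ := q x * klFun (f x / q x)

/-- The pointwise relative Fisher information of `f` with respect to `q` in the metric
`dx² / w²`. -/
noncomputable def fisherDensity (w q f : ℝ → ℝ) (x : ℝ) : ℝ :=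
  w x ^ 2 * deriv (fun y => Real.log (f y / q y)) x ^ 2 * f x

lemma entropyDensity_eq {x : ℝ} (hq : q x ≠ 0) :
    entropyDensity q f x = f x * Real.log (f x / q x) + q x - f x := by
  rw [entropyDensity, klFun_apply]
  field_simp

lemma entropyDensity_nonneg (hq : ∀ x, 0 ≤ q x) (hf : ∀ x, 0 ≤ f x) : 0 ≤ entropyDensity q f :=
  fun x => mul_nonneg (hq x) (klFun_nonneg (div_nonneg (hf x) (hq x)))

lemma continuous_entropyDensity (hqc : Continuous q) (hq : ∀ x, q x ≠ 0) (hf : Continuous f) :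
    Continuous (entropyDensity q f) :=
  hqc.mul (continuous_klFun.comp (hf.div hqc hq))

lemma fisherDensity_nonneg (hf : ∀ x, 0 ≤ f x) : 0 ≤ fisherDensity w q f :=
  fun x => mul_nonneg (by positivity) (hf x)

lemma deriv_log_div {x : ℝ} (hf : DifferentiableAt ℝ f x) (hq : DifferentiableAt ℝ q x)
    (hf0 : f x ≠ 0) (hq0 : q x ≠ 0) :
    deriv (fun y => Real.log (f y / q y)) x = logDeriv f x - logDeriv q x := by
  rw [deriv.log (hf.fun_div hq hq0) (div_ne_zero hf0 hq0), ← logDeriv_div x hf0 hq0 hf hq]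
  rfl

lemma IsFiniteLengthWeight.continuous_inv (hw : IsFiniteLengthWeight w) : Continuous w⁻¹ :=
  hw.differentiable.continuous.inv₀ fun x => (hw.pos x).ne'

lemma IsFiniteLengthWeight.inv_pos (hw : IsFiniteLengthWeight w) (x : ℝ) : 0 < w⁻¹ x :=
  _root_.inv_pos.2 (hw.pos x)

lemma IsFiniteLengthWeight.hasDerivAt_cumulative (hw : IsFiniteLengthWeight w) (x : ℝ) :
    HasDerivAt (cumulative w⁻¹) (w⁻¹ x) x :=
  (hasStrictDerivAt_cumulative hw.continuous_inv hw.integrable_inv x).hasDerivAt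

lemma hasDerivAt_potential {x : ℝ} (hw : DifferentiableAt ℝ w x) (hq : DifferentiableAt ℝ q x)
    (hw0 : w x ≠ 0) (hq0 : q x ≠ 0) :
    HasDerivAt (potential w q) (-(logDeriv w x + logDeriv q x)) x := by
  have h := ((hw.hasDerivAt.fun_mul hq.hasDerivAt).log (mul_ne_zero hw0 hq0)).fun_neg
  refine h.congr_deriv ?_
  rw [logDeriv_apply, logDeriv_apply]
  field_simp

lemma CurvatureBound.quadratic_le_potential_sub (hcurv : CurvatureBound w q ρ)
    (hw : IsFiniteLengthWeight w) (hq : IsPositiveDensity q) (x z : ℝ) :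
    w x * deriv (potential w q) x * (cumulative w⁻¹ z - cumulative w⁻¹ x)
        + ρ / 2 * (cumulative w⁻¹ z - cumulative w⁻¹ x) ^ 2
      ≤ potential w q z - potential w q x := by
  refine quadratic_le_sub_of_monotone (fun t => ?_) hw.hasDerivAt_cumulative
    (fun t => (hw.inv_pos t).le) hcurv x z
  rw [Pi.inv_apply, inv_mul_cancel_left₀ (hw.pos t).ne']
  exact (hasDerivAt_potential (hw.differentiable t) (hq.differentiable t) (hw.pos t).ne'
    (hq.pos t).ne').differentiableAt.hasDerivAt

/-- The flux of the density `f` under the displacement of `x` to `T x`, measured in arc length. -/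
noncomputable def transportFlux (w f T : ℝ → ℝ) (x : ℝ) : ℝ :=
  f x * w x * (cumulative w⁻¹ (T x) - cumulative w⁻¹ x)

lemma hasDerivAt_transportFlux {T : ℝ → ℝ} {x : ℝ} (hw : IsFiniteLengthWeight w)
    (hq : IsPositiveDensity q) (hf : IsPositiveDensity f) (hT : HasDerivAt T (f x / q (T x)) x) :
    HasDerivAt (transportFlux w f T)
      (f x * ((w x * (logDeriv f x - logDeriv q x) - w x * deriv (potential w q) x)
          * (cumulative w⁻¹ (T x) - cumulative w⁻¹ x)
        + w x * f x / (w (T x) * q (T x)) - 1)) x := by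
  have hfx := hf.pos x
  have hwx := hw.pos x
  have hqx := hq.pos x
  have hwT := hw.pos (T x)
  have hqT := hq.pos (T x)
  have hderiv := ((hf.differentiable x).hasDerivAt.fun_mul (hw.differentiable x).hasDerivAt).fun_mul
    (((hw.hasDerivAt_cumulative (T x)).comp x hT).sub (hw.hasDerivAt_cumulative x))
  refine hderiv.congr_deriv ?_
  rw [(hasDerivAt_potential (hw.differentiable x) (hq.differentiable x) hwx.ne' hqx.ne').deriv]
  simp only [Function.comp_apply, Pi.sub_apply, Pi.inv_apply, logDeriv_apply]
  field_simp
  ring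

/- `log r ≤ r - 1` for the Jacobian `r` of the transport in arc length, convexity of the potential
along the displacement `θ`, and Young's inequality `-s θ ≤ s² / (2ρ) + ρ θ² / 2`. -/
lemma entropyDensity_sub_le_deriv_transportFlux {T : ℝ → ℝ} (hw : IsFiniteLengthWeight w)
    (hq : IsPositiveDensity q) (hρ : 0 < ρ) (hcurv : CurvatureBound w q ρ)
    (hf : IsPositiveDensity f) (x : ℝ) :
    entropyDensity q f x - (1 / (2 * ρ) * fisherDensity w q f x + (q x - f x)) ≤
      f x * ((w x * (logDeriv f x - logDeriv q x) - w x * deriv (potential w q) x)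
          * (cumulative w⁻¹ (T x) - cumulative w⁻¹ x)
        + w x * f x / (w (T x) * q (T x)) - 1) := by
  have hfx := hf.pos x
  have hwx := hw.pos x
  have hqx := hq.pos x
  have hwT := hw.pos (T x)
  have hqT := hq.pos (T x)
  set θ := cumulative w⁻¹ (T x) - cumulative w⁻¹ x
  set r := w x * f x / (w (T x) * q (T x)) with hr
  set s := w x * (logDeriv f x - logDeriv q x) with hs
  have hlog : Real.log (f x / q x) = Real.log r + potential w q x - potential w q (T x) := by
    rw [hr, potential, potential, Real.log_div hfx.ne' hqx.ne',
      Real.log_div (by positivity) (by positivity), Real.log_mul hwx.ne' hfx.ne',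
      Real.log_mul hwx.ne' hqx.ne']
    ring
  have hjac : Real.log r ≤ r - 1 := Real.log_le_sub_one_of_pos (by positivity)
  have hconv := hcurv.quadratic_le_potential_sub hw hq x (T x)
  have hyoung : 0 ≤ 1 / (2 * ρ) * s ^ 2 + s * θ + ρ / 2 * θ ^ 2 := calc
    0 ≤ 1 / (2 * ρ) * (s + ρ * θ) ^ 2 := by positivity
    _ = _ := by field_simp; ring
  have hfisher : fisherDensity w q f x = f x * s ^ 2 := by
    rw [fisherDensity, hs,
      deriv_log_div (hf.differentiable x) (hq.differentiable x) hfx.ne' hqx.ne']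
    ring
  calc _ = f x * (Real.log (f x / q x) - 1 / (2 * ρ) * s ^ 2) := by
        rw [entropyDensity_eq hqx.ne', hfisher]; ring
    _ ≤ _ := mul_le_mul_of_nonneg_left (by linarith) hfx.le

lemma frequently_transportFlux_lt (T : ℝ → ℝ) (hw : IsFiniteLengthWeight w)
    (hf : IsPositiveDensity f) {ε : ℝ} (hε : 0 < ε) :
    ∃ᶠ x in atTop, transportFlux w f T x < ε := by
  have hlt := cumulative_lt_integral hw.continuous_inv hw.integrable_inv hw.inv_pos
  refine (frequently_mul_abs_sub_lt_of_integrable hf.integrable hw.hasDerivAt_cumulative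
    (tendsto_cumulative_atTop hw.integrable_inv) (fun x => (hlt x).ne) hε).mono fun x hx => ?_
  rw [abs_of_neg (sub_neg.2 (hlt x)), neg_sub, abs_of_pos (hw.inv_pos x), Pi.inv_apply,
    ← div_eq_mul_inv, lt_div_iff₀ (hw.pos x), mul_right_comm] at hx
  refine lt_of_le_of_lt ?_ hx
  exact mul_le_mul_of_nonneg_left (sub_le_sub_right (hlt (T x)).le _)
    (mul_pos (hf.pos x) (hw.pos x)).le

lemma frequently_lt_transportFlux (T : ℝ → ℝ) (hw : IsFiniteLengthWeight w)
    (hf : IsPositiveDensity f) {ε : ℝ} (hε : 0 < ε) :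
    ∃ᶠ x in atBot, -ε < transportFlux w f T x := by
  have hpos := cumulative_pos hw.continuous_inv hw.integrable_inv hw.inv_pos
  refine (frequently_mul_abs_sub_lt_of_integrable hf.integrable hw.hasDerivAt_cumulative
    tendsto_cumulative_atBot (fun x => (hpos x).ne') hε).mono fun x hx => ?_
  rw [sub_zero, abs_of_pos (hpos x), abs_of_pos (hw.inv_pos x), Pi.inv_apply,
    ← div_eq_mul_inv, lt_div_iff₀ (hw.pos x), mul_right_comm] at hx
  have hflux : 0 ≤ f x * w x * cumulative w⁻¹ (T x) :=
    (mul_pos (mul_pos (hf.pos x) (hw.pos x)) (hpos (T x))).le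
  rw [transportFlux, mul_sub]
  linarith

theorem IsPositiveDensity.integral_entropyDensity_le (hf : IsPositiveDensity f)
    (hw : IsFiniteLengthWeight w) (hq : IsPositiveDensity q) (hρ : 0 < ρ)
    (hcurv : CurvatureBound w q ρ) (hJ : Integrable (fisherDensity w q f)) :
    Integrable (entropyDensity q f) ∧
      ∫ x, entropyDensity q f x ≤ 1 / (2 * ρ) * ∫ x, fisherDensity w q f x := by
  obtain ⟨T, hT⟩ := exists_transport hf.differentiable.continuous hf.integrable hf.pos
    hq.differentiable.continuous hq.integrable hq.pos
    (hf.integral_eq_one.trans hq.integral_eq_one.symm)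
  have hmass : Integrable fun x => q x - f x := hq.integrable.sub hf.integrable
  have hsum : ∫ x, (1 / (2 * ρ) * fisherDensity w q f x + (q x - f x))
      = 1 / (2 * ρ) * ∫ x, fisherDensity w q f x := by
    rw [integral_add (hJ.const_mul _) hmass, integral_sub hq.integrable hf.integrable,
      hq.integral_eq_one, hf.integral_eq_one, integral_const_mul, sub_self, add_zero]
  rw [← hsum]
  exact integrable_and_integral_le_of_sub_le_deriv
    (continuous_entropyDensity hq.differentiable.continuous (fun x => (hq.pos x).ne')
      hf.differentiable.continuous)
    (entropyDensity_nonneg (fun x => (hq.pos x).le) fun x => (hf.pos x).le)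
    ((hJ.const_mul _).add hmass) (fun x => hasDerivAt_transportFlux hw hq hf (hT x))
    (entropyDensity_sub_le_deriv_transportFlux hw hq hρ hcurv hf)
    (fun _ => frequently_transportFlux_lt T hw hf) fun _ => frequently_lt_transportFlux T hw hf

end PositiveDensity

section Mixture

variable {w q f : ℝ → ℝ} {ρ ε : ℝ}

/-- The mixture of `f` with a share `ε` of `q`: for a positive `q` it regularizes the zeros
of `f`. -/
def mixture (ε : ℝ) (q f : ℝ → ℝ) (x : ℝ) : ℝ := (1 - ε) * f x + ε * q x

lemma hasDerivAt_mixture {x : ℝ} (hq : DifferentiableAt ℝ q x) (hf : DifferentiableAt ℝ f x) :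
    HasDerivAt (mixture ε q f) ((1 - ε) * deriv f x + ε * deriv q x) x :=
  (hf.hasDerivAt.const_mul (1 - ε)).add (hq.hasDerivAt.const_mul ε)

lemma mixture_pos {x : ℝ} (hq : 0 < q x) (hf : 0 ≤ f x) (hε0 : 0 < ε) (hε1 : ε ≤ 1) :
    0 < mixture ε q f x :=
  add_pos_of_nonneg_of_pos (mul_nonneg (sub_nonneg.2 hε1) hf) (mul_pos hε0 hq)

lemma isPositiveDensity_mixture (hq : IsPositiveDensity q) (hf : Differentiable ℝ f)
    (hf0 : ∀ x, 0 ≤ f x) (hf1 : ∫ x, f x = 1) (hε0 : 0 < ε) (hε1 : ε ≤ 1) :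
    IsPositiveDensity (mixture ε q f) where
  differentiable x := (hasDerivAt_mixture (hq.differentiable x) (hf x)).differentiableAt
  pos x := mixture_pos (hq.pos x) (hf0 x) hε0 hε1
  integral_eq_one := by
    have hfi : Integrable f := integrable_of_integral_eq_one hf1
    simp only [mixture]
    rw [integral_add (hfi.const_mul _) (hq.integrable.const_mul _), integral_const_mul,
      integral_const_mul, hf1, hq.integral_eq_one]
    ring

/- At a zero of `f` both sides vanish, by the convention `a / 0 = 0`. -/
lemma fisherDensity_eq {x : ℝ} (hf : DifferentiableAt ℝ f x) (hq : DifferentiableAt ℝ q x)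
    (hq0 : q x ≠ 0) :
    fisherDensity w q f x = w x ^ 2 * ((deriv f x - f x * logDeriv q x) ^ 2 / f x) := by
  rcases eq_or_ne (f x) 0 with hfx | hfx
  · simp only [fisherDensity, hfx, mul_zero, div_zero]
  · rw [fisherDensity, deriv_log_div hf hq hfx hq0, logDeriv_apply]
    field_simp

lemma fisherDensity_mixture_le {x : ℝ} (hq : IsPositiveDensity q) (hf : DifferentiableAt ℝ f x)
    (hf0 : ∀ x, 0 ≤ f x) (hε0 : 0 < ε) (hε1 : ε ≤ 1) :
    fisherDensity w q (mixture ε q f) x ≤ fisherDensity w q f x := by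
  have hmix := hasDerivAt_mixture (ε := ε) (hq.differentiable x) hf
  have hqx := hq.pos x
  have hscore : deriv (mixture ε q f) x - mixture ε q f x * logDeriv q x
      = (1 - ε) * (deriv f x - f x * logDeriv q x) := by
    rw [hmix.deriv, mixture, logDeriv_apply]
    field_simp
    ring
  rw [fisherDensity_eq hmix.differentiableAt (hq.differentiable x) hqx.ne',
    fisherDensity_eq hf (hq.differentiable x) hqx.ne', hscore]
  refine mul_le_mul_of_nonneg_left ?_ (sq_nonneg _)
  rcases (hf0 x).eq_or_lt with hfx | hfx
  · have hmin : IsLocalMin f x := Eventually.of_forall fun y => hfx ▸ hf0 y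
    simp [← hfx, hmin.deriv_eq_zero]
  have hshare : 0 ≤ 1 - ε := sub_nonneg.2 hε1
  have hle : (1 - ε) ^ 2 * f x ≤ mixture ε q f x := calc
    (1 - ε) ^ 2 * f x ≤ (1 - ε) * f x :=
      mul_le_mul_of_nonneg_right (pow_le_of_le_one hshare (sub_le_self 1 hε0.le) two_ne_zero)
        hfx.le
    _ ≤ mixture ε q f x := le_add_of_nonneg_right (mul_pos hε0 hqx).le
  rw [div_le_div_iff₀ (mixture_pos hqx hfx.le hε0 hε1) hfx, mul_pow, mul_comm ((1 - ε) ^ 2),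
    mul_assoc]
  exact mul_le_mul_of_nonneg_left hle (sq_nonneg _)

lemma measurable_fisherDensity (hw : Measurable w) (hf : Measurable f) :
    Measurable (fisherDensity w q f) :=
  ((hw.pow_const 2).mul ((measurable_deriv _).pow_const 2)).mul hf

lemma integral_entropyDensity_mixture_le (hw : IsFiniteLengthWeight w) (hq : IsPositiveDensity q)
    (hρ : 0 < ρ) (hcurv : CurvatureBound w q ρ) (hf : Differentiable ℝ f) (hf0 : ∀ x, 0 ≤ f x)
    (hf1 : ∫ x, f x = 1) (hJ : Integrable (fisherDensity w q f)) (hε0 : 0 < ε) (hε1 : ε ≤ 1) :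
    Integrable (entropyDensity q (mixture ε q f)) ∧
      ∫ x, entropyDensity q (mixture ε q f) x ≤ 1 / (2 * ρ) * ∫ x, fisherDensity w q f x := by
  have hmix := isPositiveDensity_mixture hq hf hf0 hf1 hε0 hε1
  have hle (x : ℝ) : fisherDensity w q (mixture ε q f) x ≤ fisherDensity w q f x :=
    fisherDensity_mixture_le hq (hf x) hf0 hε0 hε1
  have hJmix : Integrable (fisherDensity w q (mixture ε q f)) := by
    refine hJ.mono' (measurable_fisherDensity hw.differentiable.continuous.measurable
      hmix.differentiable.continuous.measurable).aestronglyMeasurable (ae_of_all _ fun x => ?_)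
    rw [Real.norm_of_nonneg (fisherDensity_nonneg (fun x => (hmix.pos x).le) x)]
    exact hle x
  obtain ⟨hint, hentropy⟩ := hmix.integral_entropyDensity_le hw hq hρ hcurv hJmix
  exact ⟨hint, hentropy.trans
    (mul_le_mul_of_nonneg_left (integral_mono hJmix hJ hle) (by positivity))⟩

lemma tendsto_entropyDensity_mixture (q f : ℝ → ℝ) (x : ℝ) :
    Tendsto (fun ε => entropyDensity q (mixture ε q f) x) (𝓝 0) (𝓝 (entropyDensity q f x)) := by
  have hcont : Continuous fun ε => entropyDensity q (mixture ε q f) x := by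
    unfold entropyDensity mixture
    fun_prop
  convert hcont.tendsto 0 using 2
  simp only [entropyDensity, mixture, sub_zero, one_mul, zero_mul, add_zero]

theorem weighted_log_sobolev (hw : IsFiniteLengthWeight w) (hq : IsPositiveDensity q)
    (hρ : 0 < ρ) (hcurv : CurvatureBound w q ρ) (hf : Differentiable ℝ f) (hf0 : ∀ x, 0 ≤ f x)
    (hf1 : ∫ x, f x = 1) (hJ : Integrable (fisherDensity w q f)) :
    Integrable (fun x => f x * Real.log (f x / q x)) ∧
      ∫ x, f x * Real.log (f x / q x) ≤ 1 / (2 * ρ) * ∫ x, fisherDensity w q f x := by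
  have hε0 (n : ℕ) : 0 < 1 / ((n : ℝ) + 1) := Nat.one_div_pos_of_nat
  have hε1 (n : ℕ) : 1 / ((n : ℝ) + 1) ≤ 1 := by
    simpa using Nat.one_div_le_one_div (α := ℝ) n.zero_le
  have hmix (n : ℕ) := integral_entropyDensity_mixture_le hw hq hρ hcurv hf hf0 hf1 hJ
    (hε0 n) (hε1 n)
  obtain ⟨hint, hle⟩ := integrable_and_integral_le_of_tendsto (fun n => (hmix n).1)
    (fun n => entropyDensity_nonneg (fun x => (hq.pos x).le) fun x =>
      ((isPositiveDensity_mixture hq hf hf0 hf1 (hε0 n) (hε1 n)).pos x).le)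
    (ae_of_all _ fun x => (tendsto_entropyDensity_mixture q f x).comp
      tendsto_one_div_add_atTop_nhds_zero_nat)
    (Eventually.of_forall fun n => (hmix n).2) tendsto_const_nhds
  have hfi : Integrable f := integrable_of_integral_eq_one hf1
  have hmass : Integrable fun x => q x - f x := hq.integrable.sub hfi
  have heq : (fun x => f x * Real.log (f x / q x))
      = fun x => entropyDensity q f x - (q x - f x) := by
    funext x
    rw [entropyDensity_eq (hq.pos x).ne']
    ring
  rw [heq]
  refine ⟨hint.sub hmass, ?_⟩
  rw [integral_sub hint hmass, integral_sub hq.integrable hfi, hq.integral_eq_one, hf1, sub_self,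
    sub_zero]
  exact hle

end Mixture

section Cauchy

variable {α β C : ℝ}

lemma one_add_sq_pos (x : ℝ) : 0 < 1 + x ^ 2 := by positivity

lemma hasDerivAt_one_add_sq_rpow (p x : ℝ) :
    HasDerivAt (fun x : ℝ => (1 + x ^ 2) ^ p) (2 * p * x * (1 + x ^ 2) ^ (p - 1)) x := by
  refine (((hasDerivAt_pow 2 x).const_add 1).rpow_const (Or.inl (one_add_sq_pos x).ne')).congr_deriv
    ?_
  push_cast
  ring

/-- The Cauchy-type density `f_β`, with normalizing constant `C`. -/
noncomputable def cauchyDensity (C β x : ℝ) : ℝ := C / (1 + x ^ 2) ^ β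

/-- The square root of the weight `(1 + x²)^α` of the Fisher information. -/
noncomputable def cauchyWeight (α x : ℝ) : ℝ := (1 + x ^ 2) ^ (α / 2)

/-- The constant `ρ_{β,α}`, a Bakry–Émery curvature bound of the density `f_β` for the weight
`(1 + x²)^α`. -/
noncomputable def cauchyCurvature (β α : ℝ) : ℝ :=
  if α < 3 / 2 then (2 * β - α) * ((α - 1) / (2 - α)) ^ (3 - 2 * α) else 2 * β - α

lemma isPositiveDensity_cauchyDensity (hC : 0 < C) (hnorm : ∫ x, cauchyDensity C β x = 1) :
    IsPositiveDensity (cauchyDensity C β) where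
  differentiable x := ((hasDerivAt_const x C).fun_div (hasDerivAt_one_add_sq_rpow β x)
    (by positivity)).differentiableAt
  pos x := by unfold cauchyDensity; positivity
  integral_eq_one := hnorm

lemma isFiniteLengthWeight_cauchyWeight (hα : 1 < α) : IsFiniteLengthWeight (cauchyWeight α) where
  differentiable x := (hasDerivAt_one_add_sq_rpow (α / 2) x).differentiableAt
  pos x := by unfold cauchyWeight; positivity
  integrable_inv := by
    have hdecay := integrable_rpow_neg_one_add_norm_sq (E := ℝ) (μ := volume) (r := α) (by simpa)
    refine hdecay.congr (ae_of_all _ fun x => ?_)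
    simp only [Pi.inv_apply, cauchyWeight, Real.norm_eq_abs, sq_abs, neg_div,
      Real.rpow_neg (one_add_sq_pos x).le]

lemma fisherDensity_cauchyWeight (α : ℝ) (q f : ℝ → ℝ) : fisherDensity (cauchyWeight α) q f =
    fun x => (1 + x ^ 2) ^ α * deriv (fun y => Real.log (f y / q y)) x ^ 2 * f x := by
  funext x
  rw [fisherDensity, cauchyWeight, ← Real.rpow_natCast, ← Real.rpow_mul (one_add_sq_pos x).le,
    Nat.cast_ofNat, div_mul_cancel₀ α two_ne_zero]

lemma potential_cauchy (hC : 0 < C) (x : ℝ) :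
    potential (cauchyWeight α) (cauchyDensity C β) x
      = (β - α / 2) * Real.log (1 + x ^ 2) - Real.log C := by
  have hx := one_add_sq_pos x
  rw [potential, cauchyWeight, cauchyDensity, Real.log_mul (by positivity) (by positivity),
    Real.log_div hC.ne' (by positivity), Real.log_rpow hx, Real.log_rpow hx]
  ring

lemma cauchyWeight_mul_deriv_potential (hC : 0 < C) (x : ℝ) :
    cauchyWeight α x * deriv (potential (cauchyWeight α) (cauchyDensity C β)) x
      = (2 * β - α) * (x * (1 + x ^ 2) ^ (α / 2 - 1)) := by
  have hx := one_add_sq_pos x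
  have hlog : HasDerivAt (fun x : ℝ => (β - α / 2) * Real.log (1 + x ^ 2) - Real.log C) _ x :=
    ((((hasDerivAt_pow 2 x).const_add 1).log hx.ne').const_mul (β - α / 2)).sub_const _
  rw [funext (potential_cauchy hC), hlog.deriv, cauchyWeight, Real.rpow_sub_one hx.ne']
  push_cast
  field_simp

/- Weighted AM–GM for `m (1 + s)` and `m⁻¹` with weights `2 - α` and `α - 1`. -/
lemma rpow_mul_one_add_rpow_le {s : ℝ} (hα1 : 1 < α) (hα2 : α < 2) (hs : 0 ≤ s) :
    ((α - 1) / (2 - α)) ^ (3 - 2 * α) * (1 + s) ^ (2 - α) ≤ 1 + (α - 1) * s := by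
  have h1 : 0 < α - 1 := sub_pos.2 hα1
  have h2 : 0 < 2 - α := sub_pos.2 hα2
  set m := (α - 1) / (2 - α) with hm
  have hm0 : 0 < m := div_pos h1 h2
  calc m ^ (3 - 2 * α) * (1 + s) ^ (2 - α)
      = (m * (1 + s)) ^ (2 - α) * m⁻¹ ^ (α - 1) := by
        rw [Real.mul_rpow hm0.le (by positivity), Real.inv_rpow hm0.le, ← Real.rpow_neg hm0.le,
          mul_right_comm, ← Real.rpow_add hm0]
        ring_nf
    _ ≤ (2 - α) * (m * (1 + s)) + (α - 1) * m⁻¹ :=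
        Real.geom_mean_le_arith_mean2_weighted h2.le h1.le (by positivity) (by positivity) (by ring)
    _ = 1 + (α - 1) * s := by
        rw [hm]
        field_simp
        ring

lemma one_add_rpow_le {s : ℝ} (hα : 3 / 2 ≤ α) (hs : 0 ≤ s) :
    (1 + s) ^ (2 - α) ≤ 1 + (α - 1) * s := by
  rcases le_total α 2 with hα2 | hα2
  · calc (1 + s) ^ (2 - α) ≤ 1 + (2 - α) * s :=
          rpow_one_add_le_one_add_mul_self (by linarith) (by linarith) (by linarith)
      _ ≤ 1 + (α - 1) * s :=
          add_le_add_right (mul_le_mul_of_nonneg_right (by linarith) hs) 1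
  · calc (1 + s) ^ (2 - α) ≤ 1 :=
          Real.rpow_le_one_of_one_le_of_nonpos (by linarith) (by linarith)
      _ ≤ 1 + (α - 1) * s := le_add_of_nonneg_right (mul_nonneg (by linarith) hs)

lemma cauchyCurvature_mul_one_add_rpow_le {s : ℝ} (hα : 1 < α) (hαβ : α ≤ 2 * β) (hs : 0 ≤ s) :
    cauchyCurvature β α * (1 + s) ^ (2 - α) ≤ (2 * β - α) * (1 + (α - 1) * s) := by
  have hβα : 0 ≤ 2 * β - α := sub_nonneg.2 hαβ
  unfold cauchyCurvature
  split_ifs with h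
  · rw [mul_assoc]
    exact mul_le_mul_of_nonneg_left (rpow_mul_one_add_rpow_le hα (by linarith) hs) hβα
  · exact mul_le_mul_of_nonneg_left (one_add_rpow_le (not_lt.1 h) hs) hβα

lemma cauchyCurvature_pos (hα : 1 < α) (hαβ : α < 2 * β) : 0 < cauchyCurvature β α := by
  have hβα : 0 < 2 * β - α := sub_pos.2 hαβ
  unfold cauchyCurvature
  split_ifs with h
  · exact mul_pos hβα (Real.rpow_pos_of_pos (div_pos (by linarith) (by linarith)) _)
  · exact hβα

lemma hasDerivAt_mul_one_add_sq_rpow (α x : ℝ) :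
    HasDerivAt (fun x : ℝ => x * (1 + x ^ 2) ^ (α / 2 - 1))
      ((1 + x ^ 2) ^ (α / 2 - 2) * (1 + (α - 1) * x ^ 2)) x := by
  refine ((hasDerivAt_id x).fun_mul (hasDerivAt_one_add_sq_rpow (α / 2 - 1) x)).congr_deriv ?_
  have hsplit : (1 + x ^ 2) ^ (α / 2 - 1) = (1 + x ^ 2) ^ (α / 2 - 2) * (1 + x ^ 2) := by
    rw [← Real.rpow_add_one (one_add_sq_pos x).ne']
    ring_nf
  rw [hsplit, show α / 2 - 1 - 1 = α / 2 - 2 by ring, id]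
  ring

lemma curvatureBound_cauchy (hC : 0 < C) (hα : 1 < α) (hαβ : α ≤ 2 * β) :
    CurvatureBound (cauchyWeight α) (cauchyDensity C β) (cauchyCurvature β α) := by
  have hderiv (x : ℝ) := ((hasDerivAt_mul_one_add_sq_rpow α x).const_mul (2 * β - α)).fun_sub
    (((isFiniteLengthWeight_cauchyWeight hα).hasDerivAt_cumulative x).const_mul
      (cauchyCurvature β α))
  unfold CurvatureBound
  simp only [cauchyWeight_mul_deriv_potential hC]
  refine monotone_of_deriv_nonneg (fun x => (hderiv x).differentiableAt) fun x => ?_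
  have hx := one_add_sq_pos x
  have hweight : (cauchyWeight α)⁻¹ x = (1 + x ^ 2) ^ (α / 2 - 2) * (1 + x ^ 2) ^ (2 - α) := by
    rw [Pi.inv_apply, cauchyWeight, ← Real.rpow_neg hx.le, ← Real.rpow_add hx]
    ring_nf
  rw [(hderiv x).deriv, hweight, sub_nonneg]
  calc _ = (1 + x ^ 2) ^ (α / 2 - 2) * (cauchyCurvature β α * (1 + x ^ 2) ^ (2 - α)) := by ring
    _ ≤ (1 + x ^ 2) ^ (α / 2 - 2) * ((2 * β - α) * (1 + (α - 1) * x ^ 2)) :=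
        mul_le_mul_of_nonneg_left (cauchyCurvature_mul_one_add_rpow_le hα hαβ (sq_nonneg x))
          (by positivity)
    _ = _ := by ring

end Cauchy

end WeightedLogSobolev

open WeightedLogSobolev in
theorem log_sobolev_cauchy_type_relative_entropy_general {α β C : ℝ} (hα : 1 < α)
    (hαβ : α < 2 * β) (hC : 0 < C) (hnorm : ∫ x, cauchyDensity C β x = 1) {f : ℝ → ℝ}
    (hf : Differentiable ℝ f) (hfnonneg : ∀ x, 0 ≤ f x) (hfprob : ∫ x, f x = 1)
    (hrhs : Integrable fun x => (1 + x ^ 2) ^ α *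
      deriv (fun y => Real.log (f y / cauchyDensity C β y)) x ^ 2 * f x) :
    Integrable (fun x => f x * Real.log (f x / cauchyDensity C β x)) ∧
      ∫ x, f x * Real.log (f x / cauchyDensity C β x) ≤ 1 / (2 * cauchyCurvature β α) *
        ∫ x, (1 + x ^ 2) ^ α *
          deriv (fun y => Real.log (f y / cauchyDensity C β y)) x ^ 2 * f x := by
  rw [← fisherDensity_cauchyWeight] at hrhs ⊢
  exact weighted_log_sobolev (isFiniteLengthWeight_cauchyWeight hα)
    (isPositiveDensity_cauchyDensity hC hnorm) (cauchyCurvature_pos hα hαβ)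
    (curvatureBound_cauchy hC hα hαβ.le) hf hfnonneg hfprob hrhs

/-- **Weighted logarithmic Sobolev inequality for Cauchy-type densities,
relative-entropy form** (inequality (3.4)/(3.21)). Let `β > 1` and let
`f_β(x) = C_β/(1+x²)^β` be the Cauchy-type density on `ℝ`. For every `α` with
`1 < α < β` and every smooth probability density `f` on `ℝ` (automatically
absolutely continuous with respect to the everywhere positive `f_β`),
`∫ f log(f/f_β) ≤ (1/(2ρ_{β,α})) ∫ (1+x²)^α ((log(f/f_β))')² f`, where
`ρ_{β,α} = (2β−α)((α−1)/(2−α))^{3−2α}` for `1 < α < 3/2` and `ρ_{β,α} = 2β−α`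
for `3/2 ≤ α < β` (whenever the right-hand side is finite). -/
theorem log_sobolev_cauchy_type_relative_entropy
    (β α : ℝ) (hβ : 1 < β) (hα : 1 < α) (hαβ : α < β)
    (C : ℝ) (hC : 0 < C)
    (hnorm : ∫ x : ℝ, C / (1 + x ^ 2) ^ β = 1)
    (f : ℝ → ℝ) (hf : ContDiff ℝ (⊤ : ℕ∞) f) (hfnonneg : ∀ x, 0 ≤ f x)
    (hfprob : ∫ x : ℝ, f x = 1)
    (hlhs : Integrable (fun x => f x * Real.log (f x / (C / (1 + x ^ 2) ^ β))))
    (hrhs : Integrable (fun x => (1 + x ^ 2) ^ α *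
      (deriv (fun y => Real.log (f y / (C / (1 + y ^ 2) ^ β))) x) ^ 2 * f x)) :
    (∫ x : ℝ, f x * Real.log (f x / (C / (1 + x ^ 2) ^ β)))
      ≤ (1 / (2 * (if α < 3 / 2 then (2 * β - α) * ((α - 1) / (2 - α)) ^ (3 - 2 * α)
            else 2 * β - α))) *
          ∫ x : ℝ, (1 + x ^ 2) ^ α *
            (deriv (fun y => Real.log (f y / (C / (1 + y ^ 2) ^ β))) x) ^ 2 * f x := by
  exact (log_sobolev_cauchy_type_relative_entropy_general hα (by linarith) hC hnorm
    (hf.differentiable (by simp)) hfnonneg hfprob hrhs).2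
end

section
/- Let β > 1, m > 0, and let X be a random variable distributed on ℝ₊ with the inverse Gamma density h_{β,m}(x) = C_{β,m} x^{−2β} e^{−m/x}. Then for every α with 1 < α ≤ 3/2 and α < β, and every bounded smooth function φ on ℝ₊ such that Ent[φ²(X)] is finite, Ent[φ²(X)] ≤ (2/ρ_{β,α,m}) E[X^{2α} (φ'(X))²], where ρ_{β,α,m} = (1/2)((2β−α)/(3/2−α))^{3−2α} (m(2−α))^{2α−2} (α−1)^{5−4α} for 1 < α < 3/2, and ρ_{β,α,m} = m/2 for α = 3/2 (this case requiring β > 3/2). -/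
open MeasureTheory Set

/-!
In the intrinsic coordinate `Y = ∫ dx / w` the energy `∫ w² (φ')² h` is the unweighted Dirichlet
energy and the reference measure has density `w h = e^{-V}`. On a compact interval let `T` be the
monotone map transporting `φ² h` to the multiple of `h` of the same mass, and put `θ = Y ∘ T - Y`.
Take the logarithm of the Monge–Ampère equation for `T`, expand `V` to second order using `V'' ≥ ρ`,
and bound `log s ≤ s - 1`: up to `-(ρ/2) θ² φ²` and a cross term in `θ φ φ'`, this bounds the
entropy integrand by the derivative of the flux `θ φ² w h`, which vanishes at the endpoints because
`T` fixes them. Completing the square turns the two remaining terms into the energy with constant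
`2/ρ`, and exhausting the half-line by compact intervals gives the inequality there.

For the inverse Gamma density with `w = x ^ α` one finds
`V'' = (2β - α)(α - 1) x^{2α-2} + m(2 - α) x^{2α-3}`, whose exponents have opposite signs for
`α < 3/2`, so that weighted AM–GM bounds it below by the constant `ρ_{β,α,m}`.
-/

open Filter Real
open scoped Topology

/-- The entropy of `f` with respect to the measure of density `h` relative to `μ`, that is the
integral of `f log (f / f̄)` where `f̄` is the mean of `f`. The mean is taken with respect to the
normalized measure, so that restrictions of a probability measure to subsets are covered. -/
noncomputable def entropy {X : Type*} [MeasurableSpace X] (μ : Measure X) (h f : X → ℝ) : ℝ :=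
  (∫ x, f x * log (f x) * h x ∂μ) -
    (∫ x, f x * h x ∂μ) * log ((∫ x, f x * h x ∂μ) / ∫ x, h x ∂μ)

section Entropy

variable {X ι : Type*} [MeasurableSpace X] {μ : Measure X} {h f : X → ℝ}

lemma entropy_eq_zero_of_integral_eq_zero (hnonneg : 0 ≤ᵐ[μ] fun x => f x * h x)
    (hint : Integrable (fun x => f x * h x) μ) (hzero : ∫ x, f x * h x ∂μ = 0) :
    entropy μ h f = 0 := by
  have hae : (fun x => f x * log (f x) * h x) =ᵐ[μ] 0 := by
    filter_upwards [(integral_eq_zero_iff_of_nonneg_ae hnonneg hint).1 hzero] with x hx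
    rw [mul_right_comm, hx, Pi.zero_apply, zero_mul]
  rw [entropy, integral_congr_ae hae, hzero]
  simp

lemma tendsto_entropy_restrict {l : Filter ι} [l.IsCountablyGenerated] {s : ι → Set X}
    (hs : AECover μ l s) (hh : Integrable h μ) (hmass : (∫ x, h x ∂μ) ≠ 0)
    (hf : Integrable (fun x => f x * h x) μ)
    (hent : Integrable (fun x => f x * log (f x) * h x) μ) :
    Tendsto (fun i => entropy (μ.restrict (s i)) h f) l (𝓝 (entropy μ h f)) := by
  -- `c log (c / Z) = Z * ((c / Z) log (c / Z))` is continuous in `c`, also at `c = 0`.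
  have hquot := (hs.integral_tendsto_of_countably_generated hf).div
    (hs.integral_tendsto_of_countably_generated hh) hmass
  have hprod := (hs.integral_tendsto_of_countably_generated hh).mul
    ((continuous_mul_log.tendsto _).comp hquot)
  have hlim := (hs.integral_tendsto_of_countably_generated hent).sub hprod
  have hZ := (hs.integral_tendsto_of_countably_generated hh).eventually_ne hmass
  rw [← mul_assoc, mul_div_cancel₀ _ hmass] at hlim
  refine hlim.congr' ?_
  filter_upwards [hZ] with i hi
  simp only [Pi.div_apply, Function.comp_apply]
  rw [← mul_assoc, mul_div_cancel₀ _ hi, entropy]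

end Entropy

section Transport

variable {a b : ℝ} {g g₁ g₂ : ℝ → ℝ}

lemma exists_orderIso_eq_integral (hg : Continuous g) {δ : ℝ} (hδ : 0 < δ) (hδg : ∀ x, δ ≤ g x)
    (a : ℝ) : ∃ e : ℝ ≃o ℝ, ∀ x, e x = ∫ t in a..x, g t := by
  set G : ℝ → ℝ := fun x => ∫ t in a..x, g t
  have hderiv (x : ℝ) : HasDerivAt G (g x) x := (hg.integral_hasStrictDerivAt a x).hasDerivAt
  have hdiff : Differentiable ℝ G := fun x => (hderiv x).differentiableAt
  have hle (x : ℝ) : δ ≤ deriv G x := (hderiv x).deriv ▸ hδg x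
  have hGa : G a = 0 := intervalIntegral.integral_same
  have htop : Tendsto G atTop atTop := by
    refine tendsto_atTop_mono' _ ?_
      ((tendsto_atTop_add_const_right _ (-a) tendsto_id).const_mul_atTop hδ)
    filter_upwards [eventually_ge_atTop a] with x hx
    simpa [hGa, sub_eq_add_neg] using mul_sub_le_image_sub_of_le_deriv hdiff hle hx
  have hbot : Tendsto G atBot atBot := by
    refine tendsto_atBot_mono' _ ?_
      ((tendsto_atBot_add_const_right _ (-a) tendsto_id).const_mul_atBot hδ)
    filter_upwards [eventually_le_atBot a] with x hx
    have := mul_sub_le_image_sub_of_le_deriv hdiff hle hx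
    simp only [id, ← sub_eq_add_neg]
    linarith
  have hmono : StrictMono G := strictMono_of_deriv_pos fun x => hδ.trans_le (hle x)
  exact ⟨hmono.orderIsoOfSurjective G (hdiff.continuous.surjective htop hbot), fun _ => rfl⟩

lemma exists_hasDerivAt_transport (hg₁ : Continuous g₁) (hg₂ : Continuous g₂) {δ : ℝ} (hδ : 0 < δ)
    (hδg₂ : ∀ x, δ ≤ g₂ x) (hmass : ∫ x in a..b, g₁ x = ∫ x in a..b, g₂ x) :
    ∃ T : ℝ → ℝ, T a = a ∧ T b = b ∧ ∀ x, HasDerivAt T (g₁ x / g₂ (T x)) x := by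
  obtain ⟨e, he⟩ := exists_orderIso_eq_integral hg₂ hδ hδg₂ a
  have he_deriv (x : ℝ) : HasDerivAt e (g₂ x) x := by
    rw [funext he]
    exact (hg₂.integral_hasStrictDerivAt a x).hasDerivAt
  have hsymm_deriv (y : ℝ) : HasDerivAt e.symm (g₂ (e.symm y))⁻¹ y :=
    (he_deriv _).of_local_left_inverse e.symm.continuous.continuousAt
      (hδ.trans_le (hδg₂ _)).ne' (Eventually.of_forall e.apply_symm_apply)
  refine ⟨fun x => e.symm (∫ t in a..x, g₁ t), ?_, ?_, fun x => ?_⟩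
  · rw [e.symm_apply_eq, he, intervalIntegral.integral_same, intervalIntegral.integral_same]
  · rw [e.symm_apply_eq, he, hmass]
  · rw [div_eq_inv_mul]
    exact (hsymm_deriv _).comp x (hg₁.integral_hasStrictDerivAt a x).hasDerivAt

lemma exists_hasDerivAt_transport_Icc (hab : a ≤ b) (hg₁ : ContinuousOn g₁ (Icc a b))
    (hg₂ : ContinuousOn g₂ (Icc a b)) (hnonneg : ∀ x ∈ Icc a b, 0 ≤ g₁ x)
    (hpos : ∀ x ∈ Icc a b, 0 < g₂ x) (hmass : ∫ x in a..b, g₁ x = ∫ x in a..b, g₂ x) :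
    ∃ T : ℝ → ℝ, T a = a ∧ T b = b ∧ MapsTo T (Icc a b) (Icc a b) ∧
      ∀ x ∈ Icc a b, HasDerivAt T (g₁ x / g₂ (T x)) x := by
  have hext (g : ℝ → ℝ) : ∫ x in a..b, IccExtend hab ((Icc a b).domRestrict g) x =
      ∫ x in a..b, g x :=
    intervalIntegral.integral_congr fun x hx => IccExtend_of_mem hab _ (uIcc_of_le hab ▸ hx)
  obtain ⟨z, hz, hmin⟩ := isCompact_Icc.exists_isMinOn (nonempty_Icc.2 hab) hg₂
  have hle (x : ℝ) : g₂ z ≤ IccExtend hab ((Icc a b).domRestrict g₂) x := hmin (projIcc a b hab x).2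
  obtain ⟨T, hTa, hTb, hT⟩ := exists_hasDerivAt_transport
    (continuousOn_iff_continuous_domRestrict.1 hg₁).Icc_extend'
    (continuousOn_iff_continuous_domRestrict.1 hg₂).Icc_extend' (hpos z hz) hle
    ((hext g₁).trans (hmass.trans (hext g₂).symm))
  have hmono : Monotone T := monotone_of_deriv_nonneg (fun x => (hT x).differentiableAt) fun x => by
    rw [(hT x).deriv]
    exact div_nonneg (hnonneg _ (projIcc a b hab x).2) ((hpos z hz).le.trans (hle _))
  have hmaps : MapsTo T (Icc a b) (Icc a b) := by
    simpa only [hTa, hTb] using hmono.mapsTo_Icc (a := a) (b := b)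
  refine ⟨T, hTa, hTb, hmaps, fun x hx => ?_⟩
  simpa only [IccExtend_of_mem hab _ hx, IccExtend_of_mem hab _ (hmaps hx), domRestrict_apply]
    using hT x

end Transport

/-- The one-dimensional Bakry–Émery condition `CD(ρ, ∞)` on `s` for the Dirichlet form
`∫ w² (φ')² h`. In the intrinsic coordinate `Y = ∫ dx / w` the measure `h dx` has density
`w h = e^{-V}`, the drift `U` is the derivative of `V` with respect to `Y`, and `V'' ≥ ρ` is
expressed by the monotonicity of `U - ρ Y`. -/
structure WeightedCurvatureBound (h w Y U : ℝ → ℝ) (ρ : ℝ) (s : Set ℝ) : Prop where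
  density_pos : ∀ x ∈ s, 0 < h x
  continuousOn_density : ContinuousOn h s
  weight_pos : ∀ x ∈ s, 0 < w x
  hasDerivAt_coordinate : ∀ x ∈ s, HasDerivAt Y (w x)⁻¹ x
  hasDerivAt_weight_mul_density : ∀ x ∈ s, HasDerivAt (fun y => w y * h y) (-(U x * h x)) x
  monotoneOn_drift_sub : MonotoneOn (fun x => U x - ρ * Y x) s

namespace WeightedCurvatureBound

variable {h w Y U φ φ' T : ℝ → ℝ} {ρ a b c p t u v x : ℝ} {s : Set ℝ}

lemma mono (H : WeightedCurvatureBound h w Y U ρ s) {t : Set ℝ} (hts : t ⊆ s) :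
    WeightedCurvatureBound h w Y U ρ t where
  density_pos x hx := H.density_pos x (hts hx)
  continuousOn_density := H.continuousOn_density.mono hts
  weight_pos x hx := H.weight_pos x (hts hx)
  hasDerivAt_coordinate x hx := H.hasDerivAt_coordinate x (hts hx)
  hasDerivAt_weight_mul_density x hx := H.hasDerivAt_weight_mul_density x (hts hx)
  monotoneOn_drift_sub := H.monotoneOn_drift_sub.mono hts

lemma log_weight_mul_density_le (H : WeightedCurvatureBound h w Y U ρ s) (hs : Convex ℝ s)
    (hx : x ∈ s) (ht : t ∈ s) :
    log (w t * h t) ≤ log (w x * h x) - U x * (Y t - Y x) - ρ / 2 * (Y t - Y x) ^ 2 := by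
  let K : ℝ → ℝ := fun y => log (w y * h y) + U x * (Y y - Y x) + ρ / 2 * (Y y - Y x) ^ 2
  let K' : ℝ → ℝ := fun y => (w y)⁻¹ * ((U x - ρ * Y x) - (U y - ρ * Y y))
  have hK : ∀ y ∈ s, HasDerivAt K (K' y) y := by
    intro y hy
    have hw := (H.weight_pos y hy).ne'
    have hh := (H.density_pos y hy).ne'
    have hY := (H.hasDerivAt_coordinate y hy).sub_const (Y x)
    refine ((((H.hasDerivAt_weight_mul_density y hy).log (mul_ne_zero hw hh)).add
      (hY.const_mul (U x))).add ((hY.pow 2).const_mul (ρ / 2))).congr_deriv ?_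
    simp only [K']
    field_simp
    ring
  obtain ⟨z, hz, hmvt⟩ := domain_mvt (fun y hy => (hK y hy).hasFDerivAt.hasFDerivWithinAt) hs hx ht
  have hzs := hs.segment_subset hx ht hz
  have hw := inv_pos.2 (H.weight_pos z hzs)
  have hsign : K' z * (t - x) ≤ 0 := by
    rw [segment_eq_uIcc] at hz
    rcases le_total x t with hxt | htx
    · rw [uIcc_of_le hxt] at hz
      exact mul_nonpos_of_nonpos_of_nonneg (mul_nonpos_of_nonneg_of_nonpos hw.le
        (sub_nonpos.2 (H.monotoneOn_drift_sub hx hzs hz.1))) (sub_nonneg.2 hxt)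
    · rw [uIcc_of_ge htx] at hz
      exact mul_nonpos_of_nonneg_of_nonpos (mul_nonneg hw.le
        (sub_nonneg.2 (H.monotoneOn_drift_sub hzs hx hz.2))) (sub_nonpos.2 htx)
  have hKt : K t - K x = K' z * (t - x) := by rw [hmvt]; simp [mul_comm]
  simp only [K] at hKt
  linarith

lemma log_le (H : WeightedCurvatureBound h w Y U ρ s) (hs : Convex ℝ s) (hx : x ∈ s) (ht : t ∈ s)
    (hp : 0 < p) :
    log p ≤ p * (w x * h x) / (w t * h t) - 1 - U x * (Y t - Y x) - ρ / 2 * (Y t - Y x) ^ 2 := by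
  have hqx := mul_pos (H.weight_pos x hx) (H.density_pos x hx)
  have hqt := mul_pos (H.weight_pos t ht) (H.density_pos t ht)
  have htangent := log_le_sub_one_of_pos (div_pos (mul_pos hp hqx) hqt)
  rw [log_div (mul_pos hp hqx).ne' hqt.ne', log_mul hp.ne' hqx.ne'] at htangent
  linarith [H.log_weight_mul_density_le hs hx ht]

lemma hasDerivAt_flux (H : WeightedCurvatureBound h w Y U ρ s) (hx : x ∈ s) (hTx : T x ∈ s)
    (hT : HasDerivAt T (φ x ^ 2 * h x / (c * h (T x))) x) (hφ : HasDerivAt φ v x) :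
    HasDerivAt (fun y => (Y (T y) - Y y) * φ y ^ 2 * (w y * h y))
      ((φ x ^ 2 * (φ x ^ 2 / c * (w x * h x) / (w (T x) * h (T x)) - 1 - U x * (Y (T x) - Y x)) +
        2 * (Y (T x) - Y x) * φ x * v * w x) * h x) x := by
  have hw := (H.weight_pos x hx).ne'
  refine (((((H.hasDerivAt_coordinate _ hTx).comp x hT).sub (H.hasDerivAt_coordinate x hx)).mul
    (hφ.pow 2)).mul (H.hasDerivAt_weight_mul_density x hx)).congr_deriv ?_
  simp only [Pi.sub_apply, Pi.mul_apply, Pi.pow_apply, Function.comp_apply]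
  field_simp
  ring

lemma sq_mul_log_sq_le (H : WeightedCurvatureBound h w Y U ρ s) (hs : Convex ℝ s) (hρ : 0 < ρ)
    (hc : 0 < c) (hx : x ∈ s) (ht : t ∈ s) :
    u ^ 2 * log (u ^ 2) - u ^ 2 * log c - 2 / ρ * (w x ^ 2 * v ^ 2) ≤
      u ^ 2 * (u ^ 2 / c * (w x * h x) / (w t * h t) - 1 - U x * (Y t - Y x)) +
        2 * (Y t - Y x) * u * v * w x := by
  set θ := Y t - Y x
  have hlog : u ^ 2 * log (u ^ 2) - u ^ 2 * log c ≤
      u ^ 2 * (u ^ 2 / c * (w x * h x) / (w t * h t) - 1 - U x * θ - ρ / 2 * θ ^ 2) := by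
    rcases eq_or_ne u 0 with rfl | hu
    · simp
    · have hu2 : 0 < u ^ 2 := by positivity
      rw [← mul_sub, ← log_div hu2.ne' hc.ne']
      exact mul_le_mul_of_nonneg_left (H.log_le hs hx ht (div_pos hu2 hc)) hu2.le
  have hsquare : 0 ≤ 2 / ρ * (ρ / 2 * u * θ + w x * v) ^ 2 := by positivity
  have hexpand : 2 / ρ * (ρ / 2 * u * θ + w x * v) ^ 2 =
      ρ / 2 * θ ^ 2 * u ^ 2 + 2 * θ * u * v * w x + 2 / ρ * (w x ^ 2 * v ^ 2) := by
    field_simp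
    ring
  linarith

lemma integral_sq_mul_log_sq_le (H : WeightedCurvatureBound h w Y U ρ (Icc a b)) (hρ : 0 < ρ)
    (hc : 0 < c) (hab : a ≤ b) (hφ : ∀ x ∈ Icc a b, HasDerivAt φ (φ' x) x)
    (hφ' : IntegrableOn (fun x => w x ^ 2 * φ' x ^ 2 * h x) (Icc a b))
    (hmass : ∫ x in a..b, φ x ^ 2 * h x = c * ∫ x in a..b, h x) :
    (∫ x in a..b, φ x ^ 2 * log (φ x ^ 2) * h x) - (∫ x in a..b, φ x ^ 2 * h x) * log c ≤
      2 / ρ * ∫ x in a..b, w x ^ 2 * φ' x ^ 2 * h x := by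
  have hφc : ContinuousOn φ (Icc a b) := HasDerivAt.continuousOn hφ
  have hhc := H.continuousOn_density
  obtain ⟨T, hTa, hTb, hmaps, hT⟩ := exists_hasDerivAt_transport_Icc
    (g₁ := fun x => φ x ^ 2 * h x) (g₂ := fun x => c * h x) hab
    ((hφc.pow 2).mul hhc) (continuousOn_const.mul hhc)
    (fun x hx => mul_nonneg (sq_nonneg _) (H.density_pos x hx).le)
    (fun x hx => mul_pos hc (H.density_pos x hx))
    (hmass.trans (intervalIntegral.integral_const_mul _ _).symm)
  have hflux := fun x hx => H.hasDerivAt_flux hx (hmaps hx) (hT x hx) (hφ x hx)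
  have hent : IntegrableOn (fun x => φ x ^ 2 * log (φ x ^ 2) * h x) (Icc a b) :=
    ((continuous_mul_log.comp_continuousOn (hφc.pow 2)).mul hhc).integrableOn_Icc
  have hsq : IntegrableOn (fun x => φ x ^ 2 * h x) (Icc a b) :=
    ((hφc.pow 2).mul hhc).integrableOn_Icc
  have hle := intervalIntegral.integral_le_sub_of_hasDeriv_right_of_le hab
    (HasDerivAt.continuousOn hflux)
    (fun x hx => (hflux x (Ioo_subset_Icc_self hx)).hasDerivWithinAt)
    ((hent.sub (hsq.mul_const (log c))).sub (hφ'.const_mul (2 / ρ))) fun x hx => by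
      have hx' := Ioo_subset_Icc_self hx
      have := mul_le_mul_of_nonneg_right (H.sq_mul_log_sq_le (u := φ x) (v := φ' x)
        (convex_Icc a b) hρ hc hx' (hmaps hx')) (H.density_pos x hx').le
      simp only [Pi.sub_apply]
      linarith
  have toInterval {g : ℝ → ℝ} (hg : IntegrableOn g (Icc a b)) : IntervalIntegrable g volume a b :=
    (intervalIntegrable_iff_integrableOn_Icc_of_le hab).2 hg
  simp only [Pi.sub_apply, hTa, hTb, sub_self, zero_mul] at hle
  rw [intervalIntegral.integral_sub ((toInterval hent).sub ((toInterval hsq).mul_const _))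
    ((toInterval hφ').const_mul _), intervalIntegral.integral_sub (toInterval hent)
    ((toInterval hsq).mul_const _), intervalIntegral.integral_mul_const,
    intervalIntegral.integral_const_mul] at hle
  linarith

lemma entropy_sq_le_on_Ioc (H : WeightedCurvatureBound h w Y U ρ (Icc a b)) (hρ : 0 < ρ)
    (hab : a < b) (hφ : ∀ x ∈ Icc a b, HasDerivAt φ (φ' x) x)
    (hφ' : IntegrableOn (fun x => w x ^ 2 * φ' x ^ 2 * h x) (Icc a b)) :
    entropy (volume.restrict (Ioc a b)) h (fun x => φ x ^ 2) ≤
      2 / ρ * ∫ x in Ioc a b, w x ^ 2 * φ' x ^ 2 * h x := by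
  have hφc : ContinuousOn φ (Icc a b) := HasDerivAt.continuousOn hφ
  have hmem {x : ℝ} (hx : x ∈ Ioc a b) : x ∈ Icc a b := Ioc_subset_Icc_self hx
  have hmass : 0 < ∫ x in a..b, h x := intervalIntegral.intervalIntegral_pos_of_pos_on
    (H.continuousOn_density.intervalIntegrable_of_Icc hab.le)
    (fun x hx => H.density_pos x (Ioo_subset_Icc_self hx)) hab
  have hnonneg : ∀ x ∈ Ioc a b, 0 ≤ φ x ^ 2 * h x := fun x hx =>
    mul_nonneg (sq_nonneg _) (H.density_pos x (hmem hx)).le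
  rcases (setIntegral_nonneg measurableSet_Ioc hnonneg).eq_or_lt' with hzero | hpos
  · rw [entropy_eq_zero_of_integral_eq_zero (ae_restrict_of_forall_mem measurableSet_Ioc hnonneg)
      (((hφc.pow 2).mul H.continuousOn_density).integrableOn_Icc.mono_set Ioc_subset_Icc_self)
      hzero]
    exact mul_nonneg (by positivity) (setIntegral_nonneg measurableSet_Ioc fun x hx =>
      mul_nonneg (by positivity) (H.density_pos x (hmem hx)).le)
  · rw [← intervalIntegral.integral_of_le hab.le] at hpos
    simpa only [entropy, intervalIntegral.integral_of_le hab.le] using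
      H.integral_sq_mul_log_sq_le hρ (div_pos hpos hmass) hab.le hφ hφ'
        (div_mul_cancel₀ _ hmass.ne').symm

theorem entropy_sq_le {ι : Type*} {l : Filter ι} [l.NeBot] [l.IsCountablyGenerated] {a b : ι → ℝ}
    (H : WeightedCurvatureBound h w Y U ρ s) (hρ : 0 < ρ)
    (hcover : AECover (volume.restrict s) l fun i => Ioc (a i) (b i))
    (hab : ∀ᶠ i in l, a i < b i) (hsub : ∀ᶠ i in l, Icc (a i) (b i) ⊆ s)
    (hφ : ∀ x ∈ s, HasDerivAt φ (φ' x) x)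
    (hh : IntegrableOn h s) (hmass : (∫ x in s, h x) ≠ 0)
    (hsq : IntegrableOn (fun x => φ x ^ 2 * h x) s)
    (hent : IntegrableOn (fun x => φ x ^ 2 * log (φ x ^ 2) * h x) s)
    (hφ' : IntegrableOn (fun x => w x ^ 2 * φ' x ^ 2 * h x) s) :
    entropy (volume.restrict s) h (fun x => φ x ^ 2) ≤
      2 / ρ * ∫ x in s, w x ^ 2 * φ' x ^ 2 * h x := by
  refine le_of_tendsto_of_tendsto (tendsto_entropy_restrict hcover hh hmass hsq hent)
    ((hcover.integral_tendsto_of_countably_generated hφ').const_mul (2 / ρ)) ?_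
  filter_upwards [hab, hsub] with i hi his
  rw [Measure.restrict_restrict_of_subset (Ioc_subset_Icc_self.trans his)]
  exact (H.mono his).entropy_sq_le_on_Ioc hρ hi (fun x hx => hφ x (his hx)) (hφ'.mono_set his)

end WeightedCurvatureBound

lemma rpow_mul_rpow_le_add {A B θ x : ℝ} (hA : 0 ≤ A) (hB : 0 ≤ B) (hθ₀ : 0 < θ) (hθ₁ : θ < 1)
    (hx : 0 < x) :
    (A / (1 - θ)) ^ (1 - θ) * (B / θ) ^ θ ≤ A * x ^ θ + B * x ^ (θ - 1) := by
  have hθ₁' : 0 < 1 - θ := sub_pos.2 hθ₁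
  have hcancel : (x ^ θ) ^ (1 - θ) * (x ^ (θ - 1)) ^ θ = 1 := by
    rw [← rpow_mul hx.le, ← rpow_mul hx.le, ← rpow_add hx,
      show θ * (1 - θ) + (θ - 1) * θ = 0 by ring, rpow_zero]
  calc (A / (1 - θ)) ^ (1 - θ) * (B / θ) ^ θ
      = (A / (1 - θ) * x ^ θ) ^ (1 - θ) * (B / θ * x ^ (θ - 1)) ^ θ := by
        rw [mul_rpow (by positivity) (by positivity), mul_rpow (by positivity) (by positivity),
          mul_mul_mul_comm, hcancel, mul_one]
    _ ≤ (1 - θ) * (A / (1 - θ) * x ^ θ) + θ * (B / θ * x ^ (θ - 1)) :=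
        geom_mean_le_arith_mean2_weighted hθ₁'.le hθ₀.le (by positivity) (by positivity)
          (sub_add_cancel _ _)
    _ = A * x ^ θ + B * x ^ (θ - 1) := by field_simp

/-- The inverse Gamma density `h_{β,m}` with normalizing constant `C`. -/
noncomputable def inverseGammaDensity (C β m x : ℝ) : ℝ := C * x ^ (-(2 * β)) * exp (-m / x)

/-- The constant `ρ_{β,α,m}`, a lower bound for the curvature of the inverse Gamma density with
weight `x ^ α`. -/
noncomputable def inverseGammaRate (β α m : ℝ) : ℝ :=
  if α < 3 / 2 then
    (1 / 2) * ((2 * β - α) / (3 / 2 - α)) ^ (3 - 2 * α) *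
      (m * (2 - α)) ^ (2 * α - 2) * (α - 1) ^ (5 - 4 * α)
  else m / 2

section InverseGamma

variable {C β α m ρ x : ℝ}

lemma inverseGammaDensity_pos (hC : 0 < C) (hx : 0 < x) : 0 < inverseGammaDensity C β m x := by
  unfold inverseGammaDensity
  positivity

lemma hasDerivAt_inverseGammaDensity (hx : 0 < x) :
    HasDerivAt (inverseGammaDensity C β m)
      ((m * (x ^ 2)⁻¹ - 2 * β * x⁻¹) * inverseGammaDensity C β m x) x := by
  have hexp : HasDerivAt (fun y => exp (-m / y)) (exp (-m / x) * (m * (x ^ 2)⁻¹)) x := by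
    simpa [div_eq_mul_inv] using ((hasDerivAt_inv hx.ne').const_mul (-m)).exp
  refine (((hasDerivAt_rpow_const (p := -(2 * β)) (Or.inl hx.ne')).const_mul C).mul
    hexp).congr_deriv ?_
  rw [rpow_sub_one hx.ne', inverseGammaDensity]
  ring

lemma hasDerivAt_rpow_mul_inverseGammaDensity (hx : 0 < x) :
    HasDerivAt (fun y => y ^ α * inverseGammaDensity C β m y)
      (-(((2 * β - α) * x ^ (α - 1) - m * x ^ (α - 2)) * inverseGammaDensity C β m x)) x := by
  refine ((hasDerivAt_rpow_const (p := α) (Or.inl hx.ne')).mul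
    (hasDerivAt_inverseGammaDensity hx)).congr_deriv ?_
  rw [rpow_sub_one hx.ne', rpow_sub hx α 2, rpow_two]
  ring

lemma hasDerivAt_rpow_one_sub_div (hα : α ≠ 1) (hx : 0 < x) :
    HasDerivAt (fun y => y ^ (1 - α) / (1 - α)) (x ^ α)⁻¹ x := by
  refine ((hasDerivAt_rpow_const (Or.inl hx.ne')).div_const (1 - α)).congr_deriv ?_
  rw [mul_div_cancel_left₀ _ (sub_ne_zero.2 hα.symm), ← rpow_neg hx.le]
  ring_nf

lemma monotoneOn_inverseGamma_drift_sub (hα : α ≠ 1)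
    (hρ : ∀ x > 0, ρ ≤ (2 * β - α) * (α - 1) * x ^ (2 * α - 2) + m * (2 - α) * x ^ (2 * α - 3)) :
    MonotoneOn (fun x => (2 * β - α) * x ^ (α - 1) - m * x ^ (α - 2) -
      ρ * (x ^ (1 - α) / (1 - α))) (Ioi 0) := by
  have hderiv : ∀ x ∈ Ioi (0 : ℝ), HasDerivAt (fun x => (2 * β - α) * x ^ (α - 1) -
      m * x ^ (α - 2) - ρ * (x ^ (1 - α) / (1 - α)))
      (((2 * β - α) * (α - 1) * x ^ (2 * α - 2) + m * (2 - α) * x ^ (2 * α - 3) - ρ) *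
        (x ^ α)⁻¹) x := by
    intro x hx
    have hx' : x ≠ 0 := (mem_Ioi.1 hx).ne'
    refine ((((hasDerivAt_rpow_const (Or.inl hx')).const_mul _).sub
      ((hasDerivAt_rpow_const (Or.inl hx')).const_mul _)).sub
      ((hasDerivAt_rpow_one_sub_div hα hx).const_mul ρ)).congr_deriv ?_
    have hpow₂ : x ^ (2 * α - 2) = x ^ α * x ^ (α - 1 - 1) := by rw [← rpow_add hx]; ring_nf
    have hpow₃ : x ^ (2 * α - 3) = x ^ α * x ^ (α - 2 - 1) := by rw [← rpow_add hx]; ring_nf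
    have hpow := (rpow_pos_of_pos hx α).ne'
    rw [hpow₂, hpow₃]
    field_simp
    ring
  refine monotoneOn_of_deriv_nonneg (convex_Ioi 0) (HasDerivAt.continuousOn hderiv)
    (fun x hx => (hderiv x (interior_subset hx)).differentiableAt.differentiableWithinAt)
    fun x hx => ?_
  rw [(hderiv x (interior_subset hx)).deriv]
  exact mul_nonneg (sub_nonneg.2 (hρ x (interior_subset hx)))
    (inv_nonneg.2 (rpow_nonneg (le_of_lt (interior_subset hx)) α))

lemma weightedCurvatureBound_inverseGamma (hC : 0 < C) (hα : α ≠ 1)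
    (hρ : ∀ x > 0, ρ ≤ (2 * β - α) * (α - 1) * x ^ (2 * α - 2) + m * (2 - α) * x ^ (2 * α - 3)) :
    WeightedCurvatureBound (inverseGammaDensity C β m) (fun x => x ^ α)
      (fun x => x ^ (1 - α) / (1 - α)) (fun x => (2 * β - α) * x ^ (α - 1) - m * x ^ (α - 2))
      ρ (Ioi 0) where
  density_pos _ hx := inverseGammaDensity_pos hC hx
  continuousOn_density := HasDerivAt.continuousOn fun _ hx => hasDerivAt_inverseGammaDensity hx
  weight_pos _ hx := rpow_pos_of_pos hx α
  hasDerivAt_coordinate _ hx := hasDerivAt_rpow_one_sub_div hα hx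
  hasDerivAt_weight_mul_density _ hx := hasDerivAt_rpow_mul_inverseGammaDensity hx
  monotoneOn_drift_sub := monotoneOn_inverseGamma_drift_sub hα hρ

lemma inverseGammaRate_pos (hm : 0 < m) (hα : 1 < α) (hαβ : α < 2 * β) :
    0 < inverseGammaRate β α m := by
  unfold inverseGammaRate
  split_ifs with h
  · have := sub_pos.2 hα
    have := sub_pos.2 h
    have := sub_pos.2 hαβ
    have : 0 < 2 - α := by linarith
    positivity
  · positivity

lemma inverseGammaRate_eq (hm : 0 ≤ m) (hα : 1 < α) (hα32 : α < 3 / 2) (hαβ : α ≤ 2 * β) :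
    inverseGammaRate β α m =
      ((2 * β - α) * (α - 1) / (1 - (2 * α - 2))) ^ (1 - (2 * α - 2)) *
        (m * (2 - α) / (2 * α - 2)) ^ (2 * α - 2) := by
  have hα₁ : 0 < α - 1 := sub_pos.2 hα
  have hα₂ : 0 < 3 / 2 - α := sub_pos.2 hα32
  have hB : 0 ≤ m * (2 - α) := mul_nonneg hm (by linarith)
  have hD : 0 ≤ (2 * β - α) / (3 / 2 - α) := div_nonneg (sub_nonneg.2 hαβ) hα₂.le
  have hfirst : ((2 * β - α) * (α - 1) / (1 - (2 * α - 2))) ^ (3 - 2 * α) =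
      (1 / 2) ^ (3 - 2 * α) * ((2 * β - α) / (3 / 2 - α)) ^ (3 - 2 * α) *
        (α - 1) ^ (3 - 2 * α) := by
    rw [← mul_rpow (by norm_num) hD, ← mul_rpow (by positivity) hα₁.le,
      show 1 - (2 * α - 2) = 2 * (3 / 2 - α) by ring]
    congr 1
    field_simp
  have hsecond : (m * (2 - α) / (2 * α - 2)) ^ (2 * α - 2) =
      (1 / 2) ^ (2 * α - 2) * (m * (2 - α)) ^ (2 * α - 2) * (α - 1) ^ (-1 * (2 * α - 2)) := by
    rw [rpow_mul hα₁.le, ← mul_rpow (by norm_num) hB, ← mul_rpow (by positivity) (by positivity),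
      rpow_neg_one]
    congr 1
    rw [show 2 * α - 2 = 2 * (α - 1) by ring]
    field_simp
  have hhalf : (1 / 2 : ℝ) = (1 / 2) ^ (3 - 2 * α) * (1 / 2) ^ (2 * α - 2) := by
    rw [← rpow_add (by norm_num), show 3 - 2 * α + (2 * α - 2) = 1 by ring, rpow_one]
  have hpow : (α - 1) ^ (5 - 4 * α) =
      (α - 1) ^ (3 - 2 * α) * (α - 1) ^ (-1 * (2 * α - 2)) := by
    rw [← rpow_add hα₁]
    ring_nf
  calc inverseGammaRate β α m
      = (1 / 2) ^ (3 - 2 * α) * (1 / 2) ^ (2 * α - 2) *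
          ((2 * β - α) / (3 / 2 - α)) ^ (3 - 2 * α) * (m * (2 - α)) ^ (2 * α - 2) *
          ((α - 1) ^ (3 - 2 * α) * (α - 1) ^ (-1 * (2 * α - 2))) := by
        rw [inverseGammaRate, if_pos hα32, ← hhalf, hpow]
    _ = _ := by
        rw [show 1 - (2 * α - 2) = 3 - 2 * α by ring] at hfirst ⊢
        rw [hfirst, hsecond]
        ring

lemma inverseGammaRate_le (hm : 0 ≤ m) (hα : 1 < α) (hα32 : α ≤ 3 / 2) (hαβ : α ≤ 2 * β)
    (hx : 0 < x) :
    inverseGammaRate β α m ≤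
      (2 * β - α) * (α - 1) * x ^ (2 * α - 2) + m * (2 - α) * x ^ (2 * α - 3) := by
  have hA : 0 ≤ (2 * β - α) * (α - 1) := mul_nonneg (sub_nonneg.2 hαβ) (sub_nonneg.2 hα.le)
  rcases hα32.lt_or_eq with hlt | rfl
  · rw [inverseGammaRate_eq hm hα hlt hαβ, show 2 * α - 3 = 2 * α - 2 - 1 by ring]
    exact rpow_mul_rpow_le_add hA (mul_nonneg hm (by linarith)) (by linarith) (by linarith) hx
  · rw [inverseGammaRate, if_neg (lt_irrefl _), show (2 * (3 / 2) - 3 : ℝ) = 0 by norm_num,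
      rpow_zero]
    linarith [mul_nonneg hA (rpow_nonneg hx.le (2 * (3 / 2) - 2))]

lemma aecover_Ioi_Ioc_inv :
    AECover (volume.restrict (Ioi (0 : ℝ))) atTop fun r : ℝ => Ioc r⁻¹ r :=
  (aecover_Ioi_of_Ioi tendsto_inv_atTop_zero).inter (aecover_Iic tendsto_id)

end InverseGamma

theorem log_sobolev_inverse_gamma_general {β α m C : ℝ} (hm : 0 < m) (hα : 1 < α)
    (hα32 : α ≤ 3 / 2) (hαβ : α < 2 * β) (hC : 0 < C)
    (hnorm : ∫ x in Ioi 0, inverseGammaDensity C β m x = 1)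
    {φ : ℝ → ℝ} (hφ : DifferentiableOn ℝ φ (Ioi 0))
    (hint : IntegrableOn (fun x => φ x ^ 2 * inverseGammaDensity C β m x) (Ioi 0))
    (hent : IntegrableOn (fun x => φ x ^ 2 * log (φ x ^ 2) * inverseGammaDensity C β m x) (Ioi 0))
    (hrhs : IntegrableOn
      (fun x => x ^ (2 * α) * deriv φ x ^ 2 * inverseGammaDensity C β m x) (Ioi 0)) :
    (∫ x in Ioi 0, φ x ^ 2 * log (φ x ^ 2) * inverseGammaDensity C β m x) -
        (∫ x in Ioi 0, φ x ^ 2 * inverseGammaDensity C β m x) *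
          log (∫ x in Ioi 0, φ x ^ 2 * inverseGammaDensity C β m x) ≤
      2 / inverseGammaRate β α m *
        ∫ x in Ioi 0, x ^ (2 * α) * deriv φ x ^ 2 * inverseGammaDensity C β m x := by
  have hcurv := weightedCurvatureBound_inverseGamma hC hα.ne' fun x hx =>
    inverseGammaRate_le hm.le hα hα32 hαβ.le hx
  have hmass : (∫ x in Ioi 0, inverseGammaDensity C β m x) ≠ 0 := hnorm ▸ one_ne_zero
  have hsq : EqOn (fun x => (x ^ α) ^ 2 * deriv φ x ^ 2 * inverseGammaDensity C β m x)
      (fun x => x ^ (2 * α) * deriv φ x ^ 2 * inverseGammaDensity C β m x) (Ioi 0) := fun x hx => by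
    simp only [mul_comm 2 α, rpow_mul (le_of_lt hx), rpow_two]
  have hlsi := hcurv.entropy_sq_le (inverseGammaRate_pos hm hα hαβ) aecover_Ioi_Ioc_inv
    ((eventually_gt_atTop 1).mono fun r hr => (inv_lt_one_of_one_lt₀ hr).trans hr)
    ((eventually_gt_atTop 0).mono fun r hr x hx => (inv_pos.2 hr).trans_le hx.1)
    (fun x hx => (hφ.differentiableAt (Ioi_mem_nhds hx)).hasDerivAt)
    (not_imp_comm.1 integral_undef hmass) hmass hint hent
    (hrhs.congr_fun hsq.symm measurableSet_Ioi)
  simpa only [entropy, hnorm, div_one, setIntegral_congr_fun measurableSet_Ioi hsq] using hlsi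

/-- **Weighted logarithmic Sobolev inequality for inverse Gamma densities**
(Theorem 3.2). Let `β > 1`, `m > 0` and let `X` have the inverse Gamma density
`h_{β,m}(x) = C_{β,m} x^{−2β} e^{−m/x}` on `ℝ₊`. For every `α` with
`1 < α ≤ 3/2` and `α < β`, and every bounded smooth `φ` on `ℝ₊` with
`Ent[φ²(X)]` finite,
`Ent[φ²(X)] ≤ (2/ρ_{β,α,m}) E[X^{2α}(φ'(X))²]`, where
`ρ_{β,α,m} = (1/2)((2β−α)/(3/2−α))^{3−2α} (m(2−α))^{2α−2} (α−1)^{5−4α}` for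
`1 < α < 3/2` and `ρ_{β,α,m} = m/2` for `α = 3/2`
(whenever the right-hand side is finite). -/
theorem log_sobolev_inverse_gamma
    (β α m : ℝ) (hβ : 1 < β) (hm : 0 < m)
    (hα : 1 < α) (hα32 : α ≤ 3 / 2) (hαβ : α < β)
    (C : ℝ) (hC : 0 < C)
    (hnorm : ∫ x in Ioi (0 : ℝ), C * x ^ (-(2 * β)) * Real.exp (-m / x) = 1)
    (φ : ℝ → ℝ) (hφ : ContDiffOn ℝ (⊤ : ℕ∞) φ (Ioi 0)) (hbdd : ∃ M, ∀ x ∈ Ioi (0 : ℝ), |φ x| ≤ M)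
    (hint : IntegrableOn
      (fun x => φ x ^ 2 * (C * x ^ (-(2 * β)) * Real.exp (-m / x))) (Ioi 0))
    (hent : IntegrableOn
      (fun x => φ x ^ 2 * Real.log (φ x ^ 2) * (C * x ^ (-(2 * β)) * Real.exp (-m / x))) (Ioi 0))
    (hrhs : IntegrableOn
      (fun x => x ^ (2 * α) * (deriv φ x) ^ 2 * (C * x ^ (-(2 * β)) * Real.exp (-m / x))) (Ioi 0)) :
    (∫ x in Ioi (0 : ℝ), φ x ^ 2 * Real.log (φ x ^ 2) *
          (C * x ^ (-(2 * β)) * Real.exp (-m / x)))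
        - (∫ x in Ioi (0 : ℝ), φ x ^ 2 * (C * x ^ (-(2 * β)) * Real.exp (-m / x))) *
            Real.log (∫ x in Ioi (0 : ℝ), φ x ^ 2 * (C * x ^ (-(2 * β)) * Real.exp (-m / x)))
      ≤ (2 / (if α < 3 / 2 then
              (1 / 2) * ((2 * β - α) / (3 / 2 - α)) ^ (3 - 2 * α) *
                (m * (2 - α)) ^ (2 * α - 2) * (α - 1) ^ (5 - 4 * α)
            else m / 2)) *
          ∫ x in Ioi (0 : ℝ), x ^ (2 * α) * (deriv φ x) ^ 2 *
            (C * x ^ (-(2 * β)) * Real.exp (-m / x)) :=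
  log_sobolev_inverse_gamma_general hm hα hα32 (by linarith) hC hnorm
    (hφ.differentiableOn (by simp)) hint hent hrhs
end

section
/- Let X be a random variable with an absolutely continuous density f(x) > 0 on an interval I = (i₋, i₊) ⊆ ℝ, distribution function F(x) = ∫_{i₋}^x f(y) dy, and median x̄ (i.e. F(x̄) = 1/2). Define K(x) = F(x)/f(x) for x ≤ x̄ and K(x) = (1−F(x))/f(x) for x ≥ x̄. Then for every 1 ≤ p < ∞ and every smooth function φ on I with E[|φ(X)|^p] finite, E[|φ(X) − E[φ(X)]|^p] ≤ (2p)^p E[K(X)^p |φ'(X)|^p]. -/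
/-!
By Minkowski's and Jensen's inequalities, centring `φ(X)` at its mean costs at most a factor `2` in
`L^p` compared with centring it at `φ(c)`, for any base point `c`. On either side of `c` the claim
is then a weighted Hardy inequality with constant `p`: if `G(x) = ∫_x^c |φ'|`, then
`(G ^ p F)' = G ^ p f - p |φ'| G ^ (p - 1) F`, which Young's inequality bounds below by
`(G ^ p f - p ^ p (F |φ'| / f) ^ p f) / p`, while the boundary terms of `G ^ p F` have a favourable
sign because `G(c) = 0`.
-/

open MeasureTheory Set

section Centering

variable {Ω E : Type*} [MeasurableSpace Ω] {μ : Measure Ω} [IsProbabilityMeasure μ]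
  [NormedAddCommGroup E] [NormedSpace ℝ E] [CompleteSpace E] {X : Ω → E} {p : ENNReal}

lemma enorm_sub_integral_le_eLpNorm (hp : 1 ≤ p) (hX : AEStronglyMeasurable X μ) (c : E) :
    ‖c - ∫ ω, X ω ∂μ‖ₑ ≤ eLpNorm (fun ω => X ω - c) p μ := by
  have hXc : AEStronglyMeasurable (fun ω => X ω - c) μ := hX.sub aestronglyMeasurable_const
  by_cases hfin : eLpNorm (fun ω => X ω - c) p μ = ⊤
  · exact hfin ▸ le_top
  have hXc_int : Integrable (fun ω => X ω - c) μ :=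
    MemLp.integrable hp ⟨hXc, lt_top_iff_ne_top.2 hfin⟩
  have hX_int : Integrable X μ := by simpa [Pi.add_def] using hXc_int.add (integrable_const c)
  have hmean : (∫ ω, X ω ∂μ) - c = ∫ ω, (X ω - c) ∂μ := by
    simp [integral_sub hX_int (integrable_const c)]
  calc ‖c - ∫ ω, X ω ∂μ‖ₑ = ‖∫ ω, (X ω - c) ∂μ‖ₑ := by rw [← hmean, enorm_sub_rev]
    _ ≤ eLpNorm (fun ω => X ω - c) 1 μ := by
      rw [eLpNorm_one_eq_lintegral_enorm]
      exact enorm_integral_le_lintegral_enorm _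
    _ ≤ eLpNorm (fun ω => X ω - c) p μ := eLpNorm_le_eLpNorm_of_exponent_le hp hXc

lemma eLpNorm_sub_integral_le (hp : 1 ≤ p) (hX : AEStronglyMeasurable X μ) (c : E) :
    eLpNorm (fun ω => X ω - ∫ ω', X ω' ∂μ) p μ ≤ 2 * eLpNorm (fun ω => X ω - c) p μ := by
  set m := ∫ ω, X ω ∂μ
  have hconst : eLpNorm (fun _ => c - m) p μ = ‖c - m‖ₑ := by
    simp [eLpNorm_const _ (zero_lt_one.trans_le hp).ne' (IsProbabilityMeasure.ne_zero μ)]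
  calc eLpNorm (fun ω => X ω - m) p μ
      = eLpNorm ((fun ω => X ω - c) + fun _ => c - m) p μ := by
        congr 1 with ω
        simp
    _ ≤ eLpNorm (fun ω => X ω - c) p μ + eLpNorm (fun _ => c - m) p μ :=
        eLpNorm_add_le (hX.sub aestronglyMeasurable_const) aestronglyMeasurable_const hp
    _ ≤ 2 * eLpNorm (fun ω => X ω - c) p μ := by
        rw [hconst, two_mul]
        gcongr
        exact enorm_sub_integral_le_eLpNorm hp hX c

end Centering

section RealDensity

variable {α E : Type*} [MeasurableSpace α] [NormedAddCommGroup E] {μ : Measure α} {f : α → ℝ}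
  {g : α → E} {p : ℝ}

/-- The measure with real density `f` with respect to `μ`; for `μ = volume.restrict I` this is the
law of a real random variable with density `f` on `I`. Negative values of `f` count as zero. -/
noncomputable def withRealDensity (μ : Measure α) (f : α → ℝ) : Measure α :=
  μ.withDensity fun x => ENNReal.ofReal (f x)

lemma isProbabilityMeasure_withRealDensity (hf0 : 0 ≤ᵐ[μ] f) (hf : ∫ x, f x ∂μ = 1) :
    IsProbabilityMeasure (withRealDensity μ f) := by
  have hf_int : Integrable f μ := .of_integral_ne_zero (hf ▸ one_ne_zero)
  constructor
  rw [withRealDensity, withDensity_apply _ .univ, Measure.restrict_univ,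
    ← ofReal_integral_eq_lintegral_ofReal hf_int hf0, hf, ENNReal.ofReal_one]

lemma integral_withRealDensity [NormedSpace ℝ E] (hf : AEMeasurable f μ) (hf0 : 0 ≤ᵐ[μ] f)
    (g : α → E) :
    ∫ x, g x ∂withRealDensity μ f = ∫ x, f x • g x ∂μ := by
  rw [withRealDensity, integral_withDensity_eq_integral_toReal_smul₀ hf.ennreal_ofReal (by simp)]
  refine integral_congr_ae ?_
  filter_upwards [hf0] with x hx
  rw [ENNReal.toReal_ofReal hx]

lemma integrable_of_memLp_withRealDensity (hf : AEMeasurable f μ) (hf0 : 0 ≤ᵐ[μ] f)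
    (hp : 0 < p) (hg : MemLp g (ENNReal.ofReal p) (withRealDensity μ f)) :
    Integrable (fun x => ‖g x‖ ^ p * f x) μ := by
  have hg_int := hg.integrable_norm_rpow (by simpa) ENNReal.ofReal_ne_top
  rw [withRealDensity, integrable_withDensity_iff_integrable_smul₀' hf.ennreal_ofReal (by simp)]
    at hg_int
  refine hg_int.congr ?_
  filter_upwards [hf0] with x hx
  rw [ENNReal.toReal_ofReal hx, ENNReal.toReal_ofReal hp.le, smul_eq_mul, mul_comm]

lemma eLpNorm_withRealDensity_rpow (hf : AEMeasurable f μ) (hp : 0 < p) (g : α → E) :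
    eLpNorm g (ENNReal.ofReal p) (withRealDensity μ f) ^ p
      = ∫⁻ x, ENNReal.ofReal (‖g x‖ ^ p * f x) ∂μ := by
  rw [eLpNorm_eq_lintegral_rpow_enorm_toReal (by simpa) ENNReal.ofReal_ne_top,
    ENNReal.toReal_ofReal hp.le, one_div, ENNReal.rpow_inv_rpow hp.ne', withRealDensity,
    lintegral_withDensity_eq_lintegral_mul_non_measurable₀ _ hf.ennreal_ofReal (by simp)]
  refine lintegral_congr fun x => ?_
  rw [ENNReal.ofReal_mul (by positivity), ← ENNReal.ofReal_rpow_of_nonneg (norm_nonneg _) hp.le,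
    ofReal_norm, Pi.mul_apply, mul_comm]

lemma eLpNorm_withRealDensity_rpow_eq_ofReal_integral (hf : AEMeasurable f μ)
    (hf0 : 0 ≤ᵐ[μ] f) (hp : 0 < p)
    (hg : Integrable (fun x => ‖g x‖ ^ p * f x) μ) :
    eLpNorm g (ENNReal.ofReal p) (withRealDensity μ f) ^ p
      = ENNReal.ofReal (∫ x, ‖g x‖ ^ p * f x ∂μ) := by
  rw [eLpNorm_withRealDensity_rpow hf hp, ofReal_integral_eq_lintegral_ofReal hg]
  filter_upwards [hf0] with x hx
  exact mul_nonneg (by positivity) hx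

lemma eLpNorm_withRealDensity_ne_top (hf : AEMeasurable f μ) (hf0 : 0 ≤ᵐ[μ] f) (hp : 0 < p)
    (hg : Integrable (fun x => ‖g x‖ ^ p * f x) μ) :
    eLpNorm g (ENNReal.ofReal p) (withRealDensity μ f) ≠ ⊤ := by
  have hrpow := eLpNorm_withRealDensity_rpow_eq_ofReal_integral hf hf0 hp hg
  intro htop
  simp [htop, hp] at hrpow

lemma integral_rpow_le_of_eLpNorm_le {E' : Type*} [NormedAddCommGroup E'] {g' : α → E'} {C : ℝ}
    (hf : AEMeasurable f μ) (hf0 : 0 ≤ᵐ[μ] f) (hp : 0 < p) (hC : 0 ≤ C)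
    (hg : AEStronglyMeasurable g (withRealDensity μ f))
    (hg' : Integrable (fun x => ‖g' x‖ ^ p * f x) μ)
    (hle : eLpNorm g (ENNReal.ofReal p) (withRealDensity μ f)
      ≤ ENNReal.ofReal C * eLpNorm g' (ENNReal.ofReal p) (withRealDensity μ f)) :
    ∫ x, ‖g x‖ ^ p * f x ∂μ ≤ C ^ p * ∫ x, ‖g' x‖ ^ p * f x ∂μ := by
  have hg'_fin := eLpNorm_withRealDensity_ne_top hf hf0 hp hg'
  have hg_int : Integrable (fun x => ‖g x‖ ^ p * f x) μ :=
    integrable_of_memLp_withRealDensity hf hf0 hp ⟨hg, hle.trans_lt (by finiteness)⟩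
  have hrpow := ENNReal.rpow_le_rpow hle hp.le
  have hrhs_nonneg : 0 ≤ ∫ x, ‖g' x‖ ^ p * f x ∂μ := integral_nonneg_of_ae <| by
    filter_upwards [hf0] with x hx
    exact mul_nonneg (by positivity) hx
  rwa [ENNReal.mul_rpow_of_nonneg _ _ hp.le, ENNReal.ofReal_rpow_of_nonneg hC hp.le,
    eLpNorm_withRealDensity_rpow_eq_ofReal_integral hf hf0 hp hg_int,
    eLpNorm_withRealDensity_rpow_eq_ofReal_integral hf hf0 hp hg', ← ENNReal.ofReal_mul
      (by positivity), ENNReal.ofReal_le_ofReal_iff (by positivity)] at hrpow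

end RealDensity

section DistributionFunction

variable {I : Set ℝ} {f : ℝ → ℝ} {x : ℝ}

/-- The distribution function of a random variable with density `f` on `I`. -/
noncomputable def distributionFunction (I : Set ℝ) (f : ℝ → ℝ) (x : ℝ) : ℝ :=
  ∫ y in I ∩ Iio x, f y

/-- The weight `K` of the inequality: the probability of the tail cut off by `x` on the side away
from the base point `c`, divided by the density at `x`. -/
noncomputable def tailWeight (I : Set ℝ) (f : ℝ → ℝ) (c x : ℝ) : ℝ :=
  if x ≤ c then distributionFunction I f x / f x else (1 - distributionFunction I f x) / f x

lemma hasDerivAt_distributionFunction (hI : IsOpen I) (hf : ContinuousOn f I)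
    (hf_int : IntegrableOn f I) (hx : x ∈ I) :
    HasDerivAt (distributionFunction I f) (f x) x := by
  have hind_int : Integrable (I.indicator f) := (integrable_indicator_iff hI.measurableSet).2 hf_int
  have hind_eq : I.indicator f =ᶠ[nhds x] f :=
    Filter.eventuallyEq_of_mem (hI.mem_nhds hx) eqOn_indicator
  have hprimitive (y : ℝ) :
      distributionFunction I f y = distributionFunction I f x + ∫ t in x..y, I.indicator f t := by
    rw [distributionFunction, distributionFunction,
      ← intervalIntegral.integral_Iic_sub_Iic hind_int.integrableOn hind_int.integrableOn,
      integral_Iic_eq_integral_Iio, integral_Iic_eq_integral_Iio,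
      setIntegral_indicator hI.measurableSet, setIntegral_indicator hI.measurableSet,
      inter_comm, inter_comm (Iio x)]
    ring
  rw [funext hprimitive, ← hind_eq.eq_of_nhds]
  exact (intervalIntegral.integral_hasDerivAt_right hind_int.intervalIntegrable
    hind_int.aestronglyMeasurable.stronglyMeasurableAtFilter
    ((hf.continuousAt (hI.mem_nhds hx)).congr hind_eq.symm)).const_add _

lemma distributionFunction_mem_Icc (hI : MeasurableSet I) (hf0 : ∀ x ∈ I, 0 ≤ f x)
    (hf1 : ∫ x in I, f x = 1) (x : ℝ) : distributionFunction I f x ∈ Icc 0 1 := by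
  refine ⟨setIntegral_nonneg (hI.inter measurableSet_Iio) fun y hy => hf0 y hy.1, ?_⟩
  rw [← hf1]
  exact setIntegral_mono_set (.of_integral_ne_zero (hf1 ▸ one_ne_zero))
    (ae_restrict_of_forall_mem hI hf0) inter_subset_left.eventuallyLE

lemma tailWeight_nonneg (hI : MeasurableSet I) (hf0 : ∀ x ∈ I, 0 ≤ f x) (hf1 : ∫ x in I, f x = 1)
    (c : ℝ) (hx : x ∈ I) : 0 ≤ tailWeight I f c x := by
  have hF := distributionFunction_mem_Icc hI hf0 hf1 x
  rw [tailWeight]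
  split_ifs
  exacts [div_nonneg hF.1 (hf0 x hx), div_nonneg (sub_nonneg.2 hF.2) (hf0 x hx)]

end DistributionFunction

section HalfLines

lemma setLIntegral_inter_Iio_le_of_forall_Ioo {μ : Measure ℝ} {I : Set ℝ} {c : ℝ} {u : ℝ → ENNReal}
    {C : ENNReal} (hI : IsOpen I) (h : ∀ a ∈ I, a ≤ c → ∫⁻ x in Ioo a c, u x ∂μ ≤ C) :
    ∫⁻ x in I ∩ Iio c, u x ∂μ ≤ C := by
  let s : {q : ℚ // (q : ℝ) ∈ I ∧ (q : ℝ) ≤ c} → Set ℝ := fun q => Ioo q c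
  have hcover : I ∩ Iio c ⊆ ⋃ q, s q := by
    rintro x ⟨hx, hxc⟩
    obtain ⟨a, hax, ha⟩ := exists_Ioc_subset_of_mem_nhds (hI.mem_nhds hx) (exists_lt x)
    obtain ⟨q, haq, hqx⟩ := exists_rat_btwn hax
    exact mem_iUnion.2 ⟨⟨q, ha ⟨haq, hqx.le⟩, (hqx.trans hxc).le⟩, hqx, hxc⟩
  have hdirected : Directed (· ⊆ ·) s :=
    directed_of_isDirected_ge fun q r hqr => Ioo_subset_Ioo_left (by exact_mod_cast hqr)
  calc ∫⁻ x in I ∩ Iio c, u x ∂μ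
      ≤ ∫⁻ x in ⋃ q, s q, u x ∂μ := lintegral_mono_set hcover
    _ = ⨆ q, ∫⁻ x in s q, u x ∂μ := setLIntegral_iUnion_of_directed _ hdirected
    _ ≤ C := iSup_le fun q => h q q.2.1 q.2.2

lemma setLIntegral_inter_Iio_add_inter_Ioi {α : Type*} [MeasurableSpace α] [TopologicalSpace α]
    [LinearOrder α] [OrderClosedTopology α] [OpensMeasurableSpace α] (μ : Measure α)
    [NullSingletonClass μ] (I : Set α) (c : α) (u : α → ENNReal) :
    (∫⁻ x in I ∩ Iio c, u x ∂μ) + ∫⁻ x in I ∩ Ioi c, u x ∂μ = ∫⁻ x in I, u x ∂μ := by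
  rw [← lintegral_inter_add_sdiff u I measurableSet_Iio, sdiff_eq, compl_Iio,
    setLIntegral_congr ((Filter.EventuallyEq.refl _ I).inter Ioi_ae_eq_Ici)]

lemma setLIntegral_comp_neg_inter_Iio (μ : Measure ℝ) [μ.IsNegInvariant] (I : Set ℝ) (c : ℝ)
    (u : ℝ → ENNReal) :
    ∫⁻ x in (Neg.neg ⁻¹' I) ∩ Iio (-c), u (-x) ∂μ = ∫⁻ x in I ∩ Ioi c, u x ∂μ := by
  rw [← (Measure.measurePreserving_neg μ).setLIntegral_comp_preimage_emb
    (MeasurableEquiv.neg ℝ).measurableEmbedding, preimage_inter]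
  simp

lemma setLIntegral_Ioo_ofReal {μ : Measure ℝ} [IsLocallyFiniteMeasure μ] [NullSingletonClass μ]
    {a c : ℝ} {u : ℝ → ℝ} (hac : a ≤ c) (hu : ContinuousOn u (Icc a c))
    (hu0 : ∀ x ∈ Icc a c, 0 ≤ u x) :
    ∫⁻ x in Ioo a c, ENNReal.ofReal (u x) ∂μ = ENNReal.ofReal (∫ x in a..c, u x ∂μ) := by
  rw [intervalIntegral.integral_of_le hac, integral_Ioc_eq_integral_Ioo,
    ofReal_integral_eq_lintegral_ofReal (hu.integrableOn_Icc.mono_set Ioo_subset_Icc_self)]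
  filter_upwards [ae_restrict_mem measurableSet_Ioo] with x hx
  exact hu0 x (Ioo_subset_Icc_self hx)

end HalfLines

section Hardy

variable {E : Type*} [NormedAddCommGroup E] [NormedSpace ℝ E] [CompleteSpace E]
  {I : Set ℝ} {f F T G K h : ℝ → ℝ} {φ : ℝ → E} {p a c : ℝ}

lemma mul_mul_rpow_sub_one_le {x y : ℝ} (hp : 1 ≤ p) (hx : 0 ≤ x) (hy : 0 ≤ y) :
    p * (y * x ^ (p - 1)) ≤ y ^ p + (p - 1) * x ^ p := by
  have hp0 : 0 < p := by linarith
  have young := Real.geom_mean_le_arith_mean2_weighted (w₁ := 1 / p) (w₂ := (p - 1) / p)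
    (p₁ := y ^ p) (p₂ := x ^ p) (by positivity) (div_nonneg (by linarith) hp0.le)
    (by positivity) (by positivity) (by field_simp; ring)
  rw [← Real.rpow_mul hy, ← Real.rpow_mul hx, mul_div_cancel₀ _ hp0.ne', mul_div_cancel₀ _ hp0.ne',
    Real.rpow_one] at young
  calc p * (y * x ^ (p - 1)) ≤ p * (1 / p * y ^ p + (p - 1) / p * x ^ p) := by gcongr
    _ = y ^ p + (p - 1) * x ^ p := by field_simp

lemma rpow_mul_sub_le_mul_deriv {u k s w : ℝ} (hp : 1 ≤ p) (hu : 0 ≤ u) (hk : 0 ≤ k) (hs : 0 ≤ s)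
    (hw : 0 ≤ w) :
    u ^ p * w - p ^ p * ((k * s) ^ p * w)
      ≤ p * (-s * p * u ^ (p - 1) * (k * w) + u ^ p * w) := by
  have young := mul_le_mul_of_nonneg_right
    (mul_mul_rpow_sub_one_le hp hu (y := p * (k * s)) (by positivity)) hw
  rw [Real.mul_rpow (by positivity) (by positivity)] at young
  linarith

lemma hasDerivAt_integral_left {h : ℝ → E} (hI : IsOpen I) (hIc : I.OrdConnected)
    (hh : ContinuousOn h I) (hc : c ∈ I) {x : ℝ} (hx : x ∈ I) :
    HasDerivAt (fun x => ∫ t in x..c, h t) (-h x) x :=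
  intervalIntegral.integral_hasDerivAt_left
    (hh.mono (hIc.uIcc_subset hx hc)).intervalIntegrable
    (hh.stronglyMeasurableAtFilter hI x hx) (hh.continuousAt (hI.mem_nhds hx))

lemma integral_rpow_mul_le_of_hasDerivAt (hI : I.OrdConnected)
    (hf : ContinuousOn f I) (hf0 : ∀ x ∈ I, 0 < f x)
    (hF : ∀ x ∈ I, HasDerivAt F (f x) x) (hF0 : ∀ x ∈ I, 0 ≤ F x)
    (hh : ContinuousOn h I) (hh0 : ∀ x ∈ I, 0 ≤ h x)
    (hG : ∀ x ∈ I, HasDerivAt G (-h x) x) (hG0 : ∀ x ∈ Icc a c, 0 ≤ G x) (hGc : G c = 0)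
    (hp : 1 ≤ p) (ha : a ∈ I) (hc : c ∈ I) (hac : a ≤ c) :
    ∫ x in a..c, G x ^ p * f x ≤ p ^ p * ∫ x in a..c, (F x / f x * h x) ^ p * f x := by
  have hp0 : 0 < p := by linarith
  have hsub : Icc a c ⊆ I := hI.out ha hc
  have hGp : ContinuousOn (fun x => G x ^ p) I :=
    (HasDerivAt.continuousOn hG).rpow_const fun _ _ => .inr hp0.le
  have hGp1 : ContinuousOn (fun x => G x ^ (p - 1)) I :=
    (HasDerivAt.continuousOn hG).rpow_const fun _ _ => .inr (by linarith)
  have hFc : ContinuousOn F I := HasDerivAt.continuousOn hF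
  have hKh : ContinuousOn (fun x => (F x / f x * h x) ^ p) I :=
    ((hFc.div hf fun x hx => (hf0 x hx).ne').mul hh).rpow_const fun _ _ => .inr hp0.le
  have integrable {u : ℝ → ℝ} (hu : ContinuousOn u I) : IntervalIntegrable u volume a c :=
    (hu.mono hsub).intervalIntegrable_of_Icc hac
  have hboundary :
      ∫ x in a..c, (-h x * p * G x ^ (p - 1) * F x + G x ^ p * f x) = -(G a ^ p * F a) := by
    rw [intervalIntegral.integral_eq_sub_of_hasDerivAt (f := fun x => G x ^ p * F x)
      (fun x hx => ((hG x (hI.uIcc_subset ha hc hx)).rpow_const (.inr hp)).mul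
        (hF x (hI.uIcc_subset ha hc hx))) (integrable (by fun_prop)),
      hGc, Real.zero_rpow hp0.ne', zero_mul, zero_sub]
  have hdiff : ∫ x in a..c, (G x ^ p * f x - p ^ p * ((F x / f x * h x) ^ p * f x))
      ≤ ∫ x in a..c, p * (-h x * p * G x ^ (p - 1) * F x + G x ^ p * f x) := by
    refine intervalIntegral.integral_mono_on hac (integrable (by fun_prop))
      (integrable (by fun_prop)) fun x hx => ?_
    have hfx := hf0 x (hsub hx)
    simpa only [div_mul_cancel₀ _ hfx.ne'] using rpow_mul_sub_le_mul_deriv hp (hG0 x hx)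
      (div_nonneg (hF0 x (hsub hx)) hfx.le) (hh0 x (hsub hx)) hfx.le
  rw [intervalIntegral.integral_sub (integrable (by fun_prop)) (integrable (by fun_prop)),
    intervalIntegral.integral_const_mul, intervalIntegral.integral_const_mul, hboundary] at hdiff
  have hGa : 0 ≤ p * (G a ^ p * F a) :=
    mul_nonneg hp0.le (mul_nonneg (Real.rpow_nonneg (hG0 a ⟨le_rfl, hac⟩) p) (hF0 a ha))
  linarith

lemma norm_sub_le_integral_norm_deriv (hI : IsOpen I) (hIc : I.OrdConnected)
    (hφ : ContDiffOn ℝ 1 φ I) (ha : a ∈ I) (hc : c ∈ I) (hac : a ≤ c) :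
    ‖φ a - φ c‖ ≤ ∫ t in a..c, ‖deriv φ t‖ := by
  have hsub : uIcc a c ⊆ I := hIc.uIcc_subset ha hc
  rw [norm_sub_rev, ← intervalIntegral.integral_deriv_eq_sub
    (fun x hx => (hφ.differentiableOn one_ne_zero).differentiableAt (hI.mem_nhds (hsub hx)))
    ((hφ.continuousOn_deriv_of_isOpen hI le_rfl).mono hsub).intervalIntegrable]
  exact intervalIntegral.norm_integral_le_integral_norm hac

lemma integral_norm_sub_rpow_mul_le (hI : IsOpen I) (hIc : I.OrdConnected)
    (hf : ContinuousOn f I) (hf0 : ∀ x ∈ I, 0 < f x)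
    (hF : ∀ x ∈ I, HasDerivAt F (f x) x) (hF0 : ∀ x ∈ I, 0 ≤ F x)
    (hφ : ContDiffOn ℝ 1 φ I) (hp : 1 ≤ p) (ha : a ∈ I) (hc : c ∈ I) (hac : a ≤ c) :
    ∫ x in a..c, ‖φ x - φ c‖ ^ p * f x
      ≤ p ^ p * ∫ x in a..c, ‖(F x / f x) • deriv φ x‖ ^ p * f x := by
  have hp0 : 0 < p := by linarith
  have hsub : Icc a c ⊆ I := hIc.out ha hc
  have hdφ : ContinuousOn (fun x => ‖deriv φ x‖) I :=
    (hφ.continuousOn_deriv_of_isOpen hI le_rfl).norm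
  set G : ℝ → ℝ := fun x => ∫ t in x..c, ‖deriv φ t‖
  have hG' : ∀ x ∈ I, HasDerivAt G (-‖deriv φ x‖) x :=
    fun x => hasDerivAt_integral_left hI hIc hdφ hc
  have hφG : ∀ x ∈ Icc a c, ‖φ x - φ c‖ ≤ G x := fun x hx =>
    norm_sub_le_integral_norm_deriv hI hIc hφ (hsub hx) hc hx.2
  calc ∫ x in a..c, ‖φ x - φ c‖ ^ p * f x ≤ ∫ x in a..c, G x ^ p * f x := by
        refine intervalIntegral.integral_mono_on hac
          (ContinuousOn.intervalIntegrable_of_Icc hac (.mono ?_ hsub))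
          (ContinuousOn.intervalIntegrable_of_Icc hac (.mono ?_ hsub)) fun x hx => ?_
        · exact ((hφ.continuousOn.sub continuousOn_const).norm.rpow_const
            fun _ _ => .inr hp0.le).mul hf
        · exact ((HasDerivAt.continuousOn hG').rpow_const fun _ _ => .inr hp0.le).mul hf
        · have := (hf0 x (hsub hx)).le
          gcongr
          exact hφG x hx
    _ ≤ p ^ p * ∫ x in a..c, (F x / f x * ‖deriv φ x‖) ^ p * f x :=
        integral_rpow_mul_le_of_hasDerivAt hIc hf hf0 hF hF0 hdφ (fun _ _ => norm_nonneg _) hG'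
          (fun x hx => (norm_nonneg _).trans (hφG x hx)) intervalIntegral.integral_same hp ha hc hac
    _ = p ^ p * ∫ x in a..c, ‖(F x / f x) • deriv φ x‖ ^ p * f x := by
        congr 1
        refine intervalIntegral.integral_congr fun x hx => ?_
        have hxI := hIc.uIcc_subset ha hc hx
        simp only [norm_smul, Real.norm_of_nonneg (div_nonneg (hF0 x hxI) (hf0 x hxI).le)]

lemma setLIntegral_inter_Iio_norm_sub_rpow_le (hI : IsOpen I) (hIc : I.OrdConnected)
    (hf : ContinuousOn f I) (hf0 : ∀ x ∈ I, 0 < f x)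
    (hF : ∀ x ∈ I, HasDerivAt F (f x) x) (hF0 : ∀ x ∈ I, 0 ≤ F x)
    (hφ : ContDiffOn ℝ 1 φ I) (hp : 1 ≤ p) (hc : c ∈ I) :
    ∫⁻ x in I ∩ Iio c, ENNReal.ofReal (‖φ x - φ c‖ ^ p * f x)
      ≤ ENNReal.ofReal (p ^ p)
        * ∫⁻ x in I ∩ Iio c, ENNReal.ofReal (‖(F x / f x) • deriv φ x‖ ^ p * f x) := by
  have hp0 : 0 < p := by linarith
  refine setLIntegral_inter_Iio_le_of_forall_Ioo hI fun a ha hac => ?_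
  have hsub : Icc a c ⊆ I := hIc.out ha hc
  have hleft : ContinuousOn (fun x => ‖φ x - φ c‖ ^ p * f x) I :=
    ((hφ.continuousOn.sub continuousOn_const).norm.rpow_const fun _ _ => .inr hp0.le).mul hf
  have hright : ContinuousOn (fun x => ‖(F x / f x) • deriv φ x‖ ^ p * f x) I :=
    ((((HasDerivAt.continuousOn hF).div hf fun x hx => (hf0 x hx).ne').smul
      (hφ.continuousOn_deriv_of_isOpen hI le_rfl)).norm.rpow_const fun _ _ => .inr hp0.le).mul hf
  have nonneg (g : ℝ → E) : ∀ x ∈ Icc a c, 0 ≤ ‖g x‖ ^ p * f x := fun x hx =>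
    mul_nonneg (by positivity) (hf0 x (hsub hx)).le
  calc ∫⁻ x in Ioo a c, ENNReal.ofReal (‖φ x - φ c‖ ^ p * f x)
      = ENNReal.ofReal (∫ x in a..c, ‖φ x - φ c‖ ^ p * f x) :=
        setLIntegral_Ioo_ofReal hac (hleft.mono hsub) (nonneg _)
    _ ≤ ENNReal.ofReal (p ^ p * ∫ x in a..c, ‖(F x / f x) • deriv φ x‖ ^ p * f x) :=
        ENNReal.ofReal_le_ofReal
          (integral_norm_sub_rpow_mul_le hI hIc hf hf0 hF hF0 hφ hp ha hc hac)
    _ = ENNReal.ofReal (p ^ p)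
        * ∫⁻ x in Ioo a c, ENNReal.ofReal (‖(F x / f x) • deriv φ x‖ ^ p * f x) := by
        rw [ENNReal.ofReal_mul (by positivity),
          setLIntegral_Ioo_ofReal hac (hright.mono hsub) (nonneg _)]
    _ ≤ _ := by
        gcongr
        exact fun x hx => ⟨hsub (Ioo_subset_Icc_self hx), hx.2⟩

lemma setLIntegral_inter_Ioi_norm_sub_rpow_le (hI : IsOpen I) (hIc : I.OrdConnected)
    (hf : ContinuousOn f I) (hf0 : ∀ x ∈ I, 0 < f x)
    (hT : ∀ x ∈ I, HasDerivAt T (-f x) x) (hT0 : ∀ x ∈ I, 0 ≤ T x)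
    (hφ : ContDiffOn ℝ 1 φ I) (hp : 1 ≤ p) (hc : c ∈ I) :
    ∫⁻ x in I ∩ Ioi c, ENNReal.ofReal (‖φ x - φ c‖ ^ p * f x)
      ≤ ENNReal.ofReal (p ^ p)
        * ∫⁻ x in I ∩ Ioi c, ENNReal.ofReal (‖(T x / f x) • deriv φ x‖ ^ p * f x) := by
  have hmaps : MapsTo Neg.neg (Neg.neg ⁻¹' I) I := mapsTo_preimage _ _
  have reflected := setLIntegral_inter_Iio_norm_sub_rpow_le (I := Neg.neg ⁻¹' I) (c := -c)
    (f := fun x => f (-x)) (F := fun x => T (-x)) (φ := fun x => φ (-x))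
    (hI.preimage continuous_neg) (hIc.preimage_anti fun _ _ => neg_le_neg)
    (hf.comp continuousOn_neg hmaps) (fun x hx => hf0 _ hx)
    (fun x hx => by simpa [Function.comp_def] using (hT _ hx).comp x (hasDerivAt_neg x))
    (fun x hx => hT0 _ hx)
    (hφ.comp contDiff_neg.contDiffOn hmaps) hp (by simpa)
  simp only [deriv_comp_neg, smul_neg, norm_neg, neg_neg] at reflected
  rwa [setLIntegral_comp_neg_inter_Iio _ I c
      fun x => ENNReal.ofReal (‖φ x - φ c‖ ^ p * f x),
    setLIntegral_comp_neg_inter_Iio _ I c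
      fun x => ENNReal.ofReal (‖(T x / f x) • deriv φ x‖ ^ p * f x)] at reflected

lemma eLpNorm_sub_le_eLpNorm_smul_deriv (hI : IsOpen I) (hIc : I.OrdConnected)
    (hf : ContinuousOn f I) (hf0 : ∀ x ∈ I, 0 < f x)
    (hF : ∀ x ∈ I, HasDerivAt F (f x) x) (hF0 : ∀ x ∈ I, 0 ≤ F x)
    (hT : ∀ x ∈ I, HasDerivAt T (-f x) x) (hT0 : ∀ x ∈ I, 0 ≤ T x)
    (hKF : ∀ x ∈ I, x < c → K x = F x / f x) (hKT : ∀ x ∈ I, c < x → K x = T x / f x)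
    (hφ : ContDiffOn ℝ 1 φ I) (hp : 1 ≤ p) (hc : c ∈ I) :
    eLpNorm (fun x => φ x - φ c) (ENNReal.ofReal p) (withRealDensity (volume.restrict I) f)
      ≤ ENNReal.ofReal p
        * eLpNorm (fun x => K x • deriv φ x) (ENNReal.ofReal p)
          (withRealDensity (volume.restrict I) f) := by
  have hp0 : 0 < p := by linarith
  have hfm : AEMeasurable f (volume.restrict I) := hf.aemeasurable hI.measurableSet
  rw [← ENNReal.rpow_le_rpow_iff hp0, ENNReal.mul_rpow_of_nonneg _ _ hp0.le,
    ENNReal.ofReal_rpow_of_pos hp0, eLpNorm_withRealDensity_rpow hfm hp0,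
    eLpNorm_withRealDensity_rpow hfm hp0, ← setLIntegral_inter_Iio_add_inter_Ioi _ I c,
    ← setLIntegral_inter_Iio_add_inter_Ioi _ I c
      fun x => ENNReal.ofReal (‖K x • deriv φ x‖ ^ p * f x), mul_add]
  have hleft : ∀ x ∈ I ∩ Iio c, ENNReal.ofReal (‖K x • deriv φ x‖ ^ p * f x)
      = ENNReal.ofReal (‖(F x / f x) • deriv φ x‖ ^ p * f x) :=
    fun x hx => by rw [hKF x hx.1 hx.2]
  have hright : ∀ x ∈ I ∩ Ioi c, ENNReal.ofReal (‖K x • deriv φ x‖ ^ p * f x)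
      = ENNReal.ofReal (‖(T x / f x) • deriv φ x‖ ^ p * f x) :=
    fun x hx => by rw [hKT x hx.1 hx.2]
  rw [setLIntegral_congr_fun (hI.measurableSet.inter measurableSet_Iio) hleft,
    setLIntegral_congr_fun (hI.measurableSet.inter measurableSet_Ioi) hright]
  exact add_le_add (setLIntegral_inter_Iio_norm_sub_rpow_le hI hIc hf hf0 hF hF0 hφ hp hc)
    (setLIntegral_inter_Ioi_norm_sub_rpow_le hI hIc hf hf0 hT hT0 hφ hp hc)

lemma eLpNorm_sub_le_eLpNorm_tailWeight_smul_deriv (hI : IsOpen I) (hIc : I.OrdConnected)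
    (hf : ContinuousOn f I) (hf0 : ∀ x ∈ I, 0 < f x) (hf1 : ∫ x in I, f x = 1)
    (hφ : ContDiffOn ℝ 1 φ I) (hp : 1 ≤ p) (hc : c ∈ I) :
    eLpNorm (fun x => φ x - φ c) (ENNReal.ofReal p) (withRealDensity (volume.restrict I) f)
      ≤ ENNReal.ofReal p * eLpNorm (fun x => tailWeight I f c x • deriv φ x) (ENNReal.ofReal p)
          (withRealDensity (volume.restrict I) f) := by
  have hF' : ∀ x ∈ I, HasDerivAt (distributionFunction I f) (f x) x := fun x =>
    hasDerivAt_distributionFunction hI hf (.of_integral_ne_zero (hf1 ▸ one_ne_zero))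
  have hF := distributionFunction_mem_Icc hI.measurableSet (fun x hx => (hf0 x hx).le) hf1
  exact eLpNorm_sub_le_eLpNorm_smul_deriv hI hIc hf hf0 hF' (fun x _ => (hF x).1)
    (fun x hx => (hF' x hx).const_sub 1) (fun x _ => sub_nonneg.2 (hF x).2)
    (fun x _ hxc => if_pos hxc.le) (fun x _ hcx => if_neg hcx.not_ge) hφ hp hc

end Hardy

theorem wirtinger_with_weight_general {E : Type*} [NormedAddCommGroup E] [NormedSpace ℝ E]
    [CompleteSpace E] {I : Set ℝ} (hI : IsOpen I) (hIc : I.OrdConnected)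
    {f : ℝ → ℝ} (hf : ContinuousOn f I) (hf0 : ∀ x ∈ I, 0 < f x) (hf1 : ∫ x in I, f x = 1)
    {c : ℝ} (hc : c ∈ I) {p : ℝ} (hp : 1 ≤ p) {φ : ℝ → E} (hφ : ContDiffOn ℝ 1 φ I)
    (hrhs : IntegrableOn (fun x => tailWeight I f c x ^ p * ‖deriv φ x‖ ^ p * f x) I) :
    IntegrableOn (fun x => ‖φ x‖ ^ p * f x) I ∧
      ∫ x in I, ‖φ x - ∫ y in I, f y • φ y‖ ^ p * f x
        ≤ (2 * p) ^ p * ∫ x in I, tailWeight I f c x ^ p * ‖deriv φ x‖ ^ p * f x := by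
  have hp0 : 0 < p := by linarith
  have hIm : MeasurableSet I := hI.measurableSet
  have hf_nonneg : ∀ x ∈ I, 0 ≤ f x := fun x hx => (hf0 x hx).le
  have hf_ae_nonneg : 0 ≤ᵐ[volume.restrict I] f := ae_restrict_of_forall_mem hIm hf_nonneg
  have hfm : AEMeasurable f (volume.restrict I) := hf.aemeasurable hIm
  have : IsProbabilityMeasure (withRealDensity (volume.restrict I) f) :=
    isProbabilityMeasure_withRealDensity hf_ae_nonneg hf1
  have hφm : AEStronglyMeasurable φ (withRealDensity (volume.restrict I) f) :=
    (hφ.continuousOn.aestronglyMeasurable hIm).mono_ac (withDensity_absolutelyContinuous _ _)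
  have hweight : EqOn (fun x => tailWeight I f c x ^ p * ‖deriv φ x‖ ^ p * f x)
      (fun x => ‖tailWeight I f c x • deriv φ x‖ ^ p * f x) I := fun x hx => by
    have hweight0 : 0 ≤ tailWeight I f c x := tailWeight_nonneg hIm hf_nonneg hf1 c hx
    simp only [norm_smul, Real.norm_of_nonneg hweight0, Real.mul_rpow hweight0 (norm_nonneg _)]
  rw [integrableOn_congr_fun hweight hIm] at hrhs
  rw [setIntegral_congr_fun hIm hweight, ← integral_withRealDensity hfm hf_ae_nonneg]
  have hardy := eLpNorm_sub_le_eLpNorm_tailWeight_smul_deriv hI hIc hf hf0 hf1 hφ hp hc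
  have hrhs_fin := eLpNorm_withRealDensity_ne_top hfm hf_ae_nonneg hp0 hrhs
  have hφ_sub :
      MemLp (fun x => φ x - φ c) (ENNReal.ofReal p) (withRealDensity (volume.restrict I) f) :=
    ⟨hφm.sub aestronglyMeasurable_const, hardy.trans_lt (by finiteness)⟩
  have hφ_memLp : MemLp φ (ENNReal.ofReal p) (withRealDensity (volume.restrict I) f) := by
    simpa [Pi.add_def] using hφ_sub.add (memLp_const (φ c))
  refine ⟨integrable_of_memLp_withRealDensity hfm hf_ae_nonneg hp0 hφ_memLp,
    integral_rpow_le_of_eLpNorm_le hfm hf_ae_nonneg hp0 (by positivity)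
      (hφm.sub aestronglyMeasurable_const) hrhs ?_⟩
  rw [ENNReal.ofReal_mul zero_le_two, ENNReal.ofReal_ofNat, mul_assoc]
  exact (eLpNorm_sub_integral_le (by simpa) hφm (φ c)).trans (by gcongr)

/-- **Wirtinger-type inequality with weight** (Theorem 4.1).
Let `X` have an absolutely continuous density `f > 0` on the open interval
`I = (ia, ib) ⊆ ℝ` (possibly with infinite endpoints), with distribution function
`F(x) = ∫_{ia}^x f` and median `xbar` (`F(xbar) = 1/2`), and let
`K(x) = F(x)/f(x)` for `x ≤ xbar`, `K(x) = (1−F(x))/f(x)` for `x ≥ xbar`.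
Then for every `1 ≤ p < ∞` and every smooth `φ` on `I` with `E[|φ(X)|^p]` finite,
`E[|φ(X) − E[φ(X)]|^p] ≤ (2p)^p E[K(X)^p |φ'(X)|^p]`
(whenever the right-hand side is finite). -/
theorem wirtinger_with_weight
    (ia ib : EReal) (hii : ia < ib)
    (I : Set ℝ) (hI : I = {x : ℝ | ia < (x : EReal) ∧ (x : EReal) < ib})
    (f : ℝ → ℝ) (hfcont : ContinuousOn f I) (hfpos : ∀ x ∈ I, 0 < f x)
    (hfprob : ∫ x in I, f x = 1)
    (F : ℝ → ℝ) (hF : ∀ x, F x = ∫ y in I ∩ Iio x, f y)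
    (xbar : ℝ) (hxbar : xbar ∈ I) (hmedian : F xbar = 1 / 2)
    (K : ℝ → ℝ) (hK : ∀ x, K x = if x ≤ xbar then F x / f x else (1 - F x) / f x)
    (p : ℝ) (hp : 1 ≤ p)
    (φ : ℝ → ℝ) (hφ : ContDiffOn ℝ (⊤ : ℕ∞) φ I)
    (hlhs : IntegrableOn (fun x => |φ x| ^ p * f x) I)
    (hrhs : IntegrableOn (fun x => K x ^ p * |deriv φ x| ^ p * f x) I) :
    (∫ x in I, |φ x - ∫ y in I, φ y * f y| ^ p * f x)
      ≤ (2 * p) ^ p * ∫ x in I, K x ^ p * |deriv φ x| ^ p * f x := by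
  obtain rfl : F = distributionFunction I f := funext hF
  obtain rfl : K = tailWeight I f xbar := funext hK
  have hI_open : IsOpen I := hI ▸ isOpen_Ioo.preimage continuous_coe_real_ereal
  have hI_conn : I.OrdConnected :=
    hI ▸ ordConnected_Ioo.preimage_mono EReal.coe_strictMono.monotone
  simpa only [Real.norm_eq_abs, smul_eq_mul, mul_comm (f _)] using (wirtinger_with_weight_general
    hI_open hI_conn hfcont hfpos hfprob hxbar hp (hφ.of_le (by simp)) hrhs).2
end

section
/- Let X be a random variable with an absolutely continuous density f(x) > 0 on an interval I = (i₋, i₊) ⊆ ℝ, distribution function F, median x̄, and weight K(x) = F(x)/f(x) for x ≤ x̄, K(x) = (1−F(x))/f(x) for x ≥ x̄. Then for every 1 ≤ p < ∞ and every smooth function φ on I with φ(x̄) = 0 and E[|φ(X)|^p] finite, E[|φ(X)|^p] ≤ p^p E[K(X)^p |φ'(X)|^p]. -/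
open MeasureTheory Set

/-!
Write `m` for the median. For `x ∈ I`, a function `ψ` with `ψ m = 0` satisfies `|ψ x| ≤ ∫ |ψ'|` over
the points between `m` and `x`. Integrating against `f x dx` and exchanging the integrals, `|ψ' t|`
is weighted by the mass of the points `x` that `t` separates from `m`. This is `F t` for `t ≤ m` and
`1 - F t` for `m < t`, in both cases `K t * f t`, which gives the case `p = 1`.

For `p > 1`, taking `ψ = |φ| ^ p` gives `∫ |φ| ^ p f ≤ ∫ |φ| ^ (p - 1) (p K |φ'|) f`. By Young's
inequality the right side is at most `(1 - 1 / p) ∫ |φ| ^ p f + (1 / p) ∫ (p K |φ'|) ^ p f`, and the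
first term can be absorbed when it is finite. That is the case on compact subintervals, where
truncating the density only decreases the masses; exhausting `I` by them finishes the proof.
-/

open scoped ENNReal Interval

section LOne

variable {E : Type*} [NormedAddCommGroup E] [NormedSpace ℝ E] [CompleteSpace E]

lemma enorm_sub_le_lintegral_enorm_deriv_uIoc {ψ : ℝ → E} {a b : ℝ}
    (hψ : ∀ t ∈ uIcc a b, DifferentiableAt ℝ ψ t) :
    ‖ψ b - ψ a‖ₑ ≤ ∫⁻ t in Ι a b, ‖deriv ψ t‖ₑ := by
  rcases eq_or_ne (∫⁻ t in Ι a b, ‖deriv ψ t‖ₑ) ∞ with hinf | hfin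
  · exact hinf ▸ le_top
  · have hint : IntervalIntegrable (deriv ψ) volume a b :=
      intervalIntegrable_iff.2 ⟨aestronglyMeasurable_deriv ψ _, hfin.lt_top⟩
    rw [← intervalIntegral.integral_eq_sub_of_hasDerivAt (fun t ht ↦ (hψ t ht).hasDerivAt) hint,
      ← ofReal_norm, intervalIntegral.norm_intervalIntegral_eq, ofReal_norm]
    exact enorm_integral_le_lintegral_enorm _

/-- The mass that `μ` gives to the points lying beyond `t` as seen from `m`. The endpoint
conventions, those of `Ι m x`, make it the mass of `Iio t` for `t ≤ m` and of `Ici t` for `m < t`,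
which is where the two branches of the weight `K` come from. -/
noncomputable def massBeyond (μ : Measure ℝ) (m t : ℝ) : ℝ≥0∞ := μ {x | t ∈ Ι m x}

lemma massBeyond_mono {μ ν : Measure ℝ} (h : μ ≤ ν) (m t : ℝ) :
    massBeyond μ m t ≤ massBeyond ν m t := h _

lemma lintegral_enorm_le_lintegral_massBeyond {μ : Measure ℝ} [SFinite μ] {S : Set ℝ}
    (hS : S.OrdConnected) {m : ℝ} (hm : m ∈ S) {ψ : ℝ → E}
    (hψ : ∀ t ∈ S, DifferentiableAt ℝ ψ t) (hψm : ψ m = 0) :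
    ∫⁻ x in S, ‖ψ x‖ₑ ∂μ ≤ ∫⁻ t in S, massBeyond (μ.restrict S) m t * ‖deriv ψ t‖ₑ := by
  let between : Set (ℝ × ℝ) := {z | z.2 ∈ Ι m z.1}
  have hbetween : MeasurableSet between := by
    simp only [between, mem_uIoc]
    measurability
  let integrand : ℝ × ℝ → ℝ≥0∞ := between.indicator fun z ↦ ‖deriv ψ z.2‖ₑ
  have hintegrand : Measurable integrand :=
    ((stronglyMeasurable_deriv ψ).enorm.comp measurable_snd).indicator hbetween
  calc ∫⁻ x in S, ‖ψ x‖ₑ ∂μ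
    _ ≤ ∫⁻ x in S, (∫⁻ t in S, integrand (x, t)) ∂μ := by
        refine setLIntegral_mono' hS.measurableSet fun x hx ↦ ?_
        have hsub : uIcc m x ⊆ S := hS.uIcc_subset hm hx
        have hfund := enorm_sub_le_lintegral_enorm_deriv_uIoc fun t ht ↦ hψ t (hsub ht)
        rw [hψm, sub_zero, ← inter_eq_self_of_subset_left (uIoc_subset_uIcc.trans hsub),
          ← setLIntegral_indicator measurableSet_uIoc] at hfund
        exact hfund
    _ = ∫⁻ t in S, ∫⁻ x in S, integrand (x, t) ∂μ :=
        lintegral_lintegral_swap hintegrand.aemeasurable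
    _ = ∫⁻ t in S, massBeyond (μ.restrict S) m t * ‖deriv ψ t‖ₑ := by
        refine lintegral_congr fun t ↦ ?_
        rw [mul_comm]
        exact lintegral_indicator_const (s := {x | t ∈ Ι m x})
          (measurable_prodMk_right hbetween) ‖deriv ψ t‖ₑ

-- `k` stands for `massBeyond / f`; the product form spares any division by zeros of `f`.
lemma lintegral_enorm_mul_le_of_massBeyond_le {f k : ℝ → ℝ≥0∞} {S : Set ℝ}
    (hS : S.OrdConnected) {m : ℝ} (hm : m ∈ S) (hf : AEMeasurable f (volume.restrict S))
    (hk : ∀ t ∈ S, massBeyond ((volume.withDensity f).restrict S) m t ≤ k t * f t)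
    {ψ : ℝ → E} (hψ : ∀ t ∈ S, DifferentiableAt ℝ ψ t) (hψm : ψ m = 0) :
    ∫⁻ x in S, ‖ψ x‖ₑ * f x ≤ ∫⁻ x in S, k x * ‖deriv ψ x‖ₑ * f x := by
  have hcont : ContinuousOn ψ S := fun t ht ↦ (hψ t ht).continuousAt.continuousWithinAt
  have hψmeas : AEMeasurable (fun x ↦ ‖ψ x‖ₑ) (volume.restrict S) :=
    hcont.enorm.aemeasurable hS.measurableSet
  calc ∫⁻ x in S, ‖ψ x‖ₑ * f x
    _ = ∫⁻ x in S, ‖ψ x‖ₑ ∂(volume.withDensity f) := by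
        rw [restrict_withDensity hS.measurableSet,
          lintegral_withDensity_eq_lintegral_mul₀ hf hψmeas]
        simp only [Pi.mul_apply, mul_comm]
    _ ≤ ∫⁻ t in S, massBeyond ((volume.withDensity f).restrict S) m t * ‖deriv ψ t‖ₑ :=
        lintegral_enorm_le_lintegral_massBeyond hS hm hψ hψm
    _ ≤ ∫⁻ x in S, k x * ‖deriv ψ x‖ₑ * f x :=
        setLIntegral_mono' hS.measurableSet fun t ht ↦ by
          rw [mul_right_comm]
          gcongr
          exact hk t ht

end LOne

lemma enorm_deriv_abs_rpow {φ : ℝ → ℝ} {p x : ℝ} (hp : 1 < p) (hφ : DifferentiableAt ℝ φ x) :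
    ‖deriv (fun y ↦ |φ y| ^ p) x‖ₑ
      = ENNReal.ofReal p * ‖φ x‖ₑ ^ (p - 1) * ‖deriv φ x‖ₑ := by
  have hchain : deriv (fun y ↦ |φ y| ^ p) x = p * (|φ x| ^ (p - 2) * φ x) * deriv φ x := by
    rw [← mul_assoc]
    exact ((hasDerivAt_abs_rpow (φ x) hp).comp x hφ.hasDerivAt).deriv
  have habs : |(|φ x| ^ (p - 2) * φ x)| = |φ x| ^ (p - 1) := by
    rw [abs_mul, Real.abs_rpow_of_nonneg (abs_nonneg _), abs_abs]
    rcases eq_or_ne (φ x) 0 with h0 | h0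
    · simp [h0, Real.zero_rpow (sub_pos.2 hp).ne']
    · rw [← Real.rpow_add_one (abs_ne_zero.2 h0)]
      ring_nf
  rw [hchain, enorm_mul, enorm_mul, Real.enorm_eq_ofReal (zero_le_one.trans hp.le),
    Real.enorm_eq_ofReal_abs (_ * φ x), habs,
    ← ENNReal.ofReal_rpow_of_nonneg (abs_nonneg _) (sub_pos.2 hp).le,
    Real.enorm_eq_ofReal_abs (φ x)]

lemma lintegral_rpow_mul_le_of_le_lintegral_rpow_sub_one_mul {α : Type*} [MeasurableSpace α]
    {μ : Measure α} {u v w : α → ℝ≥0∞} {p : ℝ} (hp : 1 ≤ p) (hu : AEMeasurable u μ)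
    (hw : AEMeasurable w μ) (hfin : ∫⁻ x, u x ^ p * w x ∂μ ≠ ∞)
    (h : ∫⁻ x, u x ^ p * w x ∂μ ≤ ∫⁻ x, u x ^ (p - 1) * v x * w x ∂μ) :
    ∫⁻ x, u x ^ p * w x ∂μ ≤ ∫⁻ x, v x ^ p * w x ∂μ := by
  obtain rfl | hp := hp.eq_or_lt
  · simpa using h
  set q := p.conjExponent
  have hpq : p.HolderConjugate q := .conjExponent hp
  set A := ∫⁻ x, u x ^ p * w x ∂μ
  set B := ∫⁻ x, v x ^ p * w x ∂μ
  have hyoung (x : α) : u x ^ (p - 1) * v x * w x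
      ≤ (ENNReal.ofReal q)⁻¹ * (u x ^ p * w x) + (ENNReal.ofReal p)⁻¹ * (v x ^ p * w x) := by
    have hpow : (u x ^ (p - 1)) ^ q = u x ^ p := by
      rw [← ENNReal.rpow_mul, hpq.sub_one_mul_conj]
    calc u x ^ (p - 1) * v x * w x
      _ ≤ ((u x ^ (p - 1)) ^ q / ENNReal.ofReal q + v x ^ p / ENNReal.ofReal p) * w x := by
          gcongr
          exact ENNReal.young_inequality _ _ hpq.symm
      _ = (ENNReal.ofReal q)⁻¹ * (u x ^ p * w x) + (ENNReal.ofReal p)⁻¹ * (v x ^ p * w x) := by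
          rw [hpow, div_eq_mul_inv, div_eq_mul_inv]; ring
  have hsplit : (ENNReal.ofReal p)⁻¹ * A + (ENNReal.ofReal q)⁻¹ * A
      ≤ (ENNReal.ofReal p)⁻¹ * B + (ENNReal.ofReal q)⁻¹ * A := by
    calc (ENNReal.ofReal p)⁻¹ * A + (ENNReal.ofReal q)⁻¹ * A
      _ = A := by rw [← add_mul, hpq.inv_add_inv_ennreal, one_mul]
      _ ≤ ∫⁻ x, (ENNReal.ofReal q)⁻¹ * (u x ^ p * w x)
            + (ENNReal.ofReal p)⁻¹ * (v x ^ p * w x) ∂μ := h.trans (lintegral_mono hyoung)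
      _ = (ENNReal.ofReal p)⁻¹ * B + (ENNReal.ofReal q)⁻¹ * A := by
          have huw : AEMeasurable (fun x ↦ u x ^ p * w x) μ := (hu.pow_const p).mul hw
          rw [lintegral_add_left' (huw.const_mul _),
            lintegral_const_mul' _ _ (by simp [hpq.symm.pos]),
            lintegral_const_mul' _ _ (by simp [hpq.pos]), add_comm]
  have hcancel := ENNReal.le_of_add_le_add_right
    (ENNReal.mul_ne_top (by simp [hpq.symm.pos]) hfin) hsplit
  exact (ENNReal.mul_le_mul_iff_right (by simp) (by simp [hpq.pos])).1 hcancel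

lemma setLIntegral_le_of_forall_Icc_subset {μ : Measure ℝ} {I : Set ℝ} (hIo : IsOpen I)
    (hI : I.OrdConnected) {m : ℝ} (hm : m ∈ I) {g : ℝ → ℝ≥0∞} {C : ℝ≥0∞}
    (h : ∀ a b, Icc a b ⊆ I → m ∈ Icc a b → ∫⁻ x in Icc a b, g x ∂μ ≤ C) :
    ∫⁻ x in I, g x ∂μ ≤ C := by
  obtain ⟨L, hL, hLI⟩ : IsSigmaCompact I := by
    have := hIo.locallyCompactSpace
    exact isSigmaCompact_iff_sigmaCompactSpace.2 inferInstance
  rw [← hLI, ← iUnion_accumulate,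
    setLIntegral_iUnion_of_directed g monotone_accumulate.directed_le]
  refine iSup_le fun n ↦ ?_
  set D := insert m (accumulate L n)
  have hD : IsCompact D := (isCompact_accumulate hL n).insert m
  have hmD : m ∈ D := mem_insert _ _
  have hDI : D ⊆ I :=
    insert_subset hm ((subset_iUnion _ n).trans (iUnion_accumulate.trans hLI).subset)
  have hDIcc : D ⊆ Icc (sInf D) (sSup D) := subset_Icc_csInf_csSup hD.bddBelow hD.bddAbove
  exact (lintegral_mono_set ((subset_insert _ _).trans hDIcc)).trans <|
    h _ _ (hI.out (hDI (hD.sInf_mem ⟨m, hmD⟩)) (hDI (hD.sSup_mem ⟨m, hmD⟩))) (hDIcc hmD)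

lemma setLIntegral_enorm_rpow_mul_ne_top {α E : Type*} [TopologicalSpace α] [MeasurableSpace α]
    [SeminormedAddCommGroup E] {μ : Measure α} {C : Set α} (hC : IsCompact C)
    (hCmeas : MeasurableSet C) {φ : α → E} (hφ : ContinuousOn φ C) {f : α → ℝ≥0∞}
    (hf : ∫⁻ x in C, f x ∂μ ≠ ∞) {p : ℝ} (hp : 0 ≤ p) :
    ∫⁻ x in C, ‖φ x‖ₑ ^ p * f x ∂μ ≠ ∞ := by
  obtain ⟨M, hM⟩ := hC.exists_bound_of_continuousOn hφ
  have hbound (x : α) (hx : x ∈ C) : ‖φ x‖ₑ ^ p * f x ≤ ENNReal.ofReal M ^ p * f x := by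
    gcongr
    rw [← ofReal_norm]
    exact ENNReal.ofReal_le_ofReal (hM x hx)
  refine ne_top_of_le_ne_top ?_ (setLIntegral_mono' hCmeas hbound)
  rw [lintegral_const_mul' _ _ (by simp [hp])]
  exact ENNReal.mul_ne_top (by simp [hp]) hf

section Hardy

variable {f k : ℝ → ℝ≥0∞} {φ : ℝ → ℝ} {m p : ℝ}

lemma lintegral_enorm_rpow_mul_le_rpow_sub_one_of_massBeyond_le {S : Set ℝ} (hS : S.OrdConnected)
    (hm : m ∈ S) (hf : AEMeasurable f (volume.restrict S))
    (hk : ∀ t ∈ S, massBeyond ((volume.withDensity f).restrict S) m t ≤ k t * f t)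
    (hp : 1 ≤ p) (hφ : ∀ t ∈ S, DifferentiableAt ℝ φ t) (hφm : φ m = 0) :
    ∫⁻ x in S, ‖φ x‖ₑ ^ p * f x
      ≤ ∫⁻ x in S, ‖φ x‖ₑ ^ (p - 1) * (ENNReal.ofReal p * (k x * ‖deriv φ x‖ₑ)) * f x := by
  obtain rfl | hp := hp.eq_or_lt
  · simpa using lintegral_enorm_mul_le_of_massBeyond_le hS hm hf hk hφ hφm
  have hpower (t : ℝ) (ht : t ∈ S) : DifferentiableAt ℝ (fun y ↦ |φ y| ^ p) t :=
    ((hasDerivAt_abs_rpow (φ t) hp).comp t (hφ t ht).hasDerivAt).differentiableAt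
  calc ∫⁻ x in S, ‖φ x‖ₑ ^ p * f x
    _ = ∫⁻ x in S, ‖|φ x| ^ p‖ₑ * f x := by
        simp only [Real.enorm_rpow_of_nonneg (abs_nonneg _) (zero_le_one.trans hp.le),
          Real.enorm_abs]
    _ ≤ ∫⁻ x in S, k x * ‖deriv (fun y ↦ |φ y| ^ p) x‖ₑ * f x :=
        lintegral_enorm_mul_le_of_massBeyond_le hS hm hf hk hpower
          (by simp [hφm, (zero_lt_one.trans hp).ne'])
    _ = ∫⁻ x in S, ‖φ x‖ₑ ^ (p - 1) * (ENNReal.ofReal p * (k x * ‖deriv φ x‖ₑ)) * f x := by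
        refine setLIntegral_congr_fun hS.measurableSet fun x hx ↦ ?_
        simp only [enorm_deriv_abs_rpow hp (hφ x hx)]
        ring

theorem lintegral_enorm_rpow_mul_le_of_massBeyond_le {I : Set ℝ} (hIo : IsOpen I)
    (hI : I.OrdConnected) (hm : m ∈ I) (hf : AEMeasurable f (volume.restrict I))
    (hfin : ∀ C ⊆ I, IsCompact C → ∫⁻ x in C, f x ≠ ∞)
    (hk : ∀ t ∈ I, massBeyond ((volume.withDensity f).restrict I) m t ≤ k t * f t)
    (hp : 1 ≤ p) (hφ : DifferentiableOn ℝ φ I) (hφm : φ m = 0) :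
    ∫⁻ x in I, ‖φ x‖ₑ ^ p * f x
      ≤ ENNReal.ofReal p ^ p * ∫⁻ x in I, (k x * ‖deriv φ x‖ₑ) ^ p * f x := by
  have hp0 : 0 < p := by linarith
  rw [← lintegral_const_mul' _ _ (by simp [hp0.le])]
  refine setLIntegral_le_of_forall_Icc_subset hIo hI hm fun a b hab hmab ↦ ?_
  refine le_trans ?_ (lintegral_mono_set hab)
  have hdiff (t : ℝ) (ht : t ∈ Icc a b) : DifferentiableAt ℝ φ t :=
    hφ.differentiableAt (hIo.mem_nhds (hab ht))
  have hcont : ContinuousOn φ (Icc a b) := fun t ht ↦ (hdiff t ht).continuousAt.continuousWithinAt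
  have hlhs : ∫⁻ x in Icc a b, ‖φ x‖ₑ ^ p * f x ≠ ∞ :=
    setLIntegral_enorm_rpow_mul_ne_top isCompact_Icc measurableSet_Icc hcont
      (hfin _ hab isCompact_Icc) hp0.le
  have hweight (t : ℝ) (ht : t ∈ Icc a b) :
      massBeyond ((volume.withDensity f).restrict (Icc a b)) m t ≤ k t * f t :=
    (massBeyond_mono (Measure.restrict_mono_set _ hab) m t).trans (hk t (hab ht))
  have hf' : AEMeasurable f (volume.restrict (Icc a b)) := hf.mono_set hab
  have habsorb := lintegral_rpow_mul_le_of_le_lintegral_rpow_sub_one_mul hp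
    (hcont.aemeasurable measurableSet_Icc).enorm hf' hlhs
    (lintegral_enorm_rpow_mul_le_rpow_sub_one_of_massBeyond_le ordConnected_Icc hmab hf' hweight hp
      hdiff hφm)
  simpa only [ENNReal.mul_rpow_of_nonneg _ _ hp0.le, mul_assoc] using habsorb

end Hardy

section Density

variable {α : Type*} [MeasurableSpace α] {μ : Measure α}

lemma restrict_withDensity_ofReal_apply {I A : Set α} {f : α → ℝ} (hI : MeasurableSet I)
    (hA : MeasurableSet A) (hf : IntegrableOn f I μ) (hf0 : ∀ x ∈ I, 0 ≤ f x) :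
    (μ.withDensity fun x ↦ ENNReal.ofReal (f x)).restrict I A
      = ENNReal.ofReal (∫ x in I ∩ A, f x ∂μ) := by
  rw [Measure.restrict_apply hA, withDensity_apply _ (hA.inter hI), inter_comm,
    ofReal_integral_eq_lintegral_ofReal (hf.mono_set inter_subset_left)]
  exact ae_restrict_of_forall_mem (hI.inter hA) fun x hx ↦ hf0 x hx.1

lemma integrable_and_integral_le_of_lintegral_ofReal_le {g : α → ℝ} {c : ℝ}
    (hg : AEStronglyMeasurable g μ) (hg0 : 0 ≤ᵐ[μ] g) (hc : 0 ≤ c)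
    (h : ∫⁻ x, ENNReal.ofReal (g x) ∂μ ≤ ENNReal.ofReal c) :
    Integrable g μ ∧ ∫ x, g x ∂μ ≤ c := by
  have hint : Integrable g μ :=
    (lintegral_ofReal_ne_top_iff_integrable hg hg0).1 (ne_top_of_le_ne_top ENNReal.ofReal_ne_top h)
  rw [← ofReal_integral_eq_lintegral_ofReal hint hg0] at h
  exact ⟨hint, (ENNReal.ofReal_le_ofReal_iff hc).1 h⟩

end Density

lemma setOf_mem_uIoc_of_le {m t : ℝ} (h : t ≤ m) : {x | t ∈ Ι m x} = Iio t := by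
  simp [mem_uIoc, h, h.not_gt, Iio]

lemma setOf_mem_uIoc_of_lt {m t : ℝ} (h : m < t) : {x | t ∈ Ι m x} = Ici t := by
  simp [mem_uIoc, h, h.not_ge, Ici]

lemma measurableSet_setOf_mem_uIoc (m t : ℝ) : MeasurableSet {x | t ∈ Ι m x} := by
  rcases le_or_gt t m with h | h
  · exact setOf_mem_uIoc_of_le h ▸ measurableSet_Iio
  · exact setOf_mem_uIoc_of_lt h ▸ measurableSet_Ici

lemma massBeyond_restrict_withDensity_ofReal {I : Set ℝ} {f : ℝ → ℝ} (hI : MeasurableSet I)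
    (hf : IntegrableOn f I) (hf0 : ∀ x ∈ I, 0 ≤ f x) (m t : ℝ) :
    massBeyond ((volume.withDensity fun x ↦ ENNReal.ofReal (f x)).restrict I) m t
      = ENNReal.ofReal (∫ x in I ∩ {x | t ∈ Ι m x}, f x) :=
  restrict_withDensity_ofReal_apply hI (measurableSet_setOf_mem_uIoc m t) hf hf0

lemma ofReal_rpow_mul_abs_rpow_mul {k p : ℝ} (hk : 0 ≤ k) (hp : 0 ≤ p) (y c : ℝ) :
    ENNReal.ofReal (k ^ p * |y| ^ p * c)
      = (ENNReal.ofReal k * ‖y‖ₑ) ^ p * ENNReal.ofReal c := by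
  rw [ENNReal.ofReal_mul (by positivity), ENNReal.ofReal_mul (by positivity),
    ← ENNReal.ofReal_rpow_of_nonneg hk hp, ← ENNReal.ofReal_rpow_of_nonneg (abs_nonneg y) hp,
    ENNReal.mul_rpow_of_nonneg _ _ hp, Real.enorm_eq_ofReal_abs]

section Weight

variable {I : Set ℝ} {f F K φ : ℝ → ℝ} {m p : ℝ}

lemma weight_mul_density_eq_setIntegral (hf : IntegrableOn f I) (hmass : ∫ x in I, f x = 1)
    (hF : ∀ x, F x = ∫ y in I ∩ Iio x, f y)
    (hK : ∀ x, K x = if x ≤ m then F x / f x else (1 - F x) / f x) {t : ℝ} (ht : f t ≠ 0) :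
    K t * f t = ∫ x in I ∩ {x | t ∈ Ι m x}, f x := by
  rcases le_or_gt t m with htm | hmt
  · rw [hK, if_pos htm, div_mul_cancel₀ _ ht, setOf_mem_uIoc_of_le htm, hF]
  · rw [hK, if_neg hmt.not_ge, div_mul_cancel₀ _ ht, setOf_mem_uIoc_of_lt hmt, hF, ← hmass,
      ← integral_inter_add_sdiff measurableSet_Iio hf, add_sub_cancel_left, sdiff_eq, compl_Iio]

lemma integrableOn_and_setIntegral_abs_rpow_mul_le_of_le (hIo : IsOpen I) (hI : I.OrdConnected)
    (hf : IntegrableOn f I) (hf0 : ∀ x ∈ I, 0 ≤ f x) (hm : m ∈ I) (hK0 : ∀ x ∈ I, 0 ≤ K x)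
    (hK : ∀ t ∈ I, ∫ x in I ∩ {x | t ∈ Ι m x}, f x ≤ K t * f t) (hp : 1 ≤ p)
    (hφ : DifferentiableOn ℝ φ I) (hφm : φ m = 0)
    (hrhs : IntegrableOn (fun x ↦ K x ^ p * |deriv φ x| ^ p * f x) I) :
    IntegrableOn (fun x ↦ |φ x| ^ p * f x) I ∧
      ∫ x in I, |φ x| ^ p * f x ≤ p ^ p * ∫ x in I, K x ^ p * |deriv φ x| ^ p * f x := by
  have hp0 : 0 ≤ p := zero_le_one.trans hp
  have hImeas : MeasurableSet I := hIo.measurableSet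
  have hlhs0 (x : ℝ) (hx : x ∈ I) : 0 ≤ |φ x| ^ p * f x := mul_nonneg (by positivity) (hf0 x hx)
  have hrhs0 (x : ℝ) (hx : x ∈ I) : 0 ≤ K x ^ p * |deriv φ x| ^ p * f x :=
    mul_nonneg (mul_nonneg (Real.rpow_nonneg (hK0 x hx) p) (by positivity)) (hf0 x hx)
  have hmeas : AEStronglyMeasurable (fun x ↦ |φ x| ^ p * f x) (volume.restrict I) :=
    ((hφ.continuousOn.abs.rpow_const fun _ _ ↦ .inr hp0).aestronglyMeasurable hImeas).mul
      hf.aestronglyMeasurable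
  have hbeyond (t : ℝ) (ht : t ∈ I) :
      massBeyond ((volume.withDensity fun x ↦ ENNReal.ofReal (f x)).restrict I) m t
        ≤ ENNReal.ofReal (K t) * ENNReal.ofReal (f t) := by
    rw [massBeyond_restrict_withDensity_ofReal hImeas hf hf0, ← ENNReal.ofReal_mul (hK0 t ht)]
    exact ENNReal.ofReal_le_ofReal (hK t ht)
  refine integrable_and_integral_le_of_lintegral_ofReal_le hmeas
    (ae_restrict_of_forall_mem hImeas hlhs0)
    (mul_nonneg (by positivity) (setIntegral_nonneg hImeas hrhs0)) ?_
  calc ∫⁻ x in I, ENNReal.ofReal (|φ x| ^ p * f x)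
    _ = ∫⁻ x in I, ‖φ x‖ₑ ^ p * ENNReal.ofReal (f x) := by
        refine lintegral_congr fun x ↦ ?_
        simpa using ofReal_rpow_mul_abs_rpow_mul zero_le_one hp0 (φ x) (f x)
    _ ≤ ENNReal.ofReal p ^ p * ∫⁻ x in I,
          (ENNReal.ofReal (K x) * ‖deriv φ x‖ₑ) ^ p * ENNReal.ofReal (f x) :=
        lintegral_enorm_rpow_mul_le_of_massBeyond_le hIo hI hm hf.aemeasurable.ennreal_ofReal
          (fun C hC _ ↦ (hf.mono_set hC).lintegral_lt_top.ne) hbeyond hp hφ hφm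
    _ = ENNReal.ofReal (p ^ p) *
          ∫⁻ x in I, ENNReal.ofReal (K x ^ p * |deriv φ x| ^ p * f x) := by
        rw [ENNReal.ofReal_rpow_of_nonneg hp0 hp0]
        congr 1
        exact setLIntegral_congr_fun hImeas fun x hx ↦
          (ofReal_rpow_mul_abs_rpow_mul (hK0 x hx) hp0 _ _).symm
    _ = ENNReal.ofReal (p ^ p * ∫ x in I, K x ^ p * |deriv φ x| ^ p * f x) := by
        rw [ENNReal.ofReal_mul (by positivity), ofReal_integral_eq_lintegral_ofReal hrhs
          (ae_restrict_of_forall_mem hImeas hrhs0)]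

theorem wirtinger_with_weight_vanishing_at_median_general
    (hIo : IsOpen I) (hI : I.OrdConnected) (hfpos : ∀ x ∈ I, 0 < f x)
    (hfprob : ∫ x in I, f x = 1) (hF : ∀ x, F x = ∫ y in I ∩ Iio x, f y) (hm : m ∈ I)
    (hK : ∀ x, K x = if x ≤ m then F x / f x else (1 - F x) / f x) (hp : 1 ≤ p)
    (hφ : DifferentiableOn ℝ φ I) (hφm : φ m = 0)
    (hrhs : IntegrableOn (fun x ↦ K x ^ p * |deriv φ x| ^ p * f x) I) :
    IntegrableOn (fun x ↦ |φ x| ^ p * f x) I ∧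
      ∫ x in I, |φ x| ^ p * f x ≤ p ^ p * ∫ x in I, K x ^ p * |deriv φ x| ^ p * f x := by
  have hf : IntegrableOn f I := .of_integral_ne_zero (by simp [hfprob])
  have hf0 (x : ℝ) (hx : x ∈ I) : 0 ≤ f x := (hfpos x hx).le
  have hKf (t : ℝ) (ht : t ∈ I) : ∫ x in I ∩ {x | t ∈ Ι m x}, f x = K t * f t :=
    (weight_mul_density_eq_setIntegral hf hfprob hF hK (hfpos t ht).ne').symm
  have hK0 (t : ℝ) (ht : t ∈ I) : 0 ≤ K t := by
    refine nonneg_of_mul_nonneg_left ?_ (hfpos t ht)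
    rw [← hKf t ht]
    exact setIntegral_nonneg (hIo.measurableSet.inter (measurableSet_setOf_mem_uIoc m t))
      fun x hx ↦ hf0 x hx.1
  exact integrableOn_and_setIntegral_abs_rpow_mul_le_of_le hIo hI hf hf0 hm hK0
    (fun t ht ↦ (hKf t ht).le) hp hφ hφm hrhs

end Weight

/-- **Wirtinger-type inequality with weight, for functions vanishing at the
median** (inequality (4.7)). Let `X` have an absolutely continuous density
`f > 0` on the open interval `I = (ia, ib) ⊆ ℝ`, with distribution function `F`,
median `xbar` (`F(xbar) = 1/2`), and weight `K(x) = F(x)/f(x)` for `x ≤ xbar`,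
`K(x) = (1−F(x))/f(x)` for `x ≥ xbar`. Then for every `1 ≤ p < ∞` and every
smooth `φ` on `I` with `φ(xbar) = 0` and `E[|φ(X)|^p]` finite,
`E[|φ(X)|^p] ≤ p^p E[K(X)^p |φ'(X)|^p]`
(whenever the right-hand side is finite). -/
theorem wirtinger_with_weight_vanishing_at_median
    (ia ib : EReal) (hii : ia < ib)
    (I : Set ℝ) (hI : I = {x : ℝ | ia < (x : EReal) ∧ (x : EReal) < ib})
    (f : ℝ → ℝ) (hfcont : ContinuousOn f I) (hfpos : ∀ x ∈ I, 0 < f x)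
    (hfprob : ∫ x in I, f x = 1)
    (F : ℝ → ℝ) (hF : ∀ x, F x = ∫ y in I ∩ Iio x, f y)
    (xbar : ℝ) (hxbar : xbar ∈ I) (hmedian : F xbar = 1 / 2)
    (K : ℝ → ℝ) (hK : ∀ x, K x = if x ≤ xbar then F x / f x else (1 - F x) / f x)
    (p : ℝ) (hp : 1 ≤ p)
    (φ : ℝ → ℝ) (hφ : ContDiffOn ℝ (⊤ : ℕ∞) φ I) (hφ0 : φ xbar = 0)
    (hlhs : IntegrableOn (fun x => |φ x| ^ p * f x) I)
    (hrhs : IntegrableOn (fun x => K x ^ p * |deriv φ x| ^ p * f x) I) :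
    (∫ x in I, |φ x| ^ p * f x)
      ≤ p ^ p * ∫ x in I, K x ^ p * |deriv φ x| ^ p * f x := by
  subst hI
  exact (wirtinger_with_weight_vanishing_at_median_general
    (isOpen_Ioo.preimage continuous_coe_real_ereal)
    (ordConnected_Ioo.preimage_mono EReal.coe_strictMono.monotone) hfpos hfprob hF hxbar hK hp
    (hφ.differentiableOn (by simp)) hφ0 hrhs).2
end

section
/- Let X be a random variable with an absolutely continuous density f(x) > 0 on an interval I = (i₋, i₊) ⊆ ℝ, distribution function F, median x̄, and weight K(x) = F(x)/f(x) for x ≤ x̄, K(x) = (1−F(x))/f(x) for x ≥ x̄. Then for every smooth function φ on I with φ(x̄) = 0 and E[|φ(X)|] finite, E[|φ(X)|] ≤ E[K(X) |φ'(X)|]. -/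
open MeasureTheory Set

/-!
For `φ` absolutely continuous, `|φ x - φ c|` is at most the integral of `|φ'|` over the interval
between `c` and `x`. Integrate against the law of `X` and exchange the integrals by Tonelli: each
`|φ' t|` is then weighted by the probability that `t` lies between `c` and `X`. This is the tail
probability on the side of `t` away from `c`, that is `F t` or `1 - F t`, and so equals `K t * f t`.
-/

open scoped ENNReal Interval

section OutwardTail

variable {α : Type*} [LinearOrder α] [MeasurableSpace α]

/-- The tail mass of `μ` at `t`, on the side of `t` away from `c`. It is encoded as the mass of the
points `x` for which `t` lies between `c` and `x`, the form in which it arises from Tonelli's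
theorem. -/
noncomputable def outwardTail (μ : Measure α) (c t : α) : ℝ≥0∞ :=
  μ {x | t ∈ Ι c x}

theorem outwardTail_of_le (μ : Measure α) {c t : α} (h : t ≤ c) :
    outwardTail μ c t = μ (Iio t) := by
  simp [outwardTail, mem_uIoc, h, h.not_gt, Iio_def]

theorem outwardTail_of_lt (μ : Measure α) {c t : α} (h : c < t) :
    outwardTail μ c t = μ (Ici t) := by
  simp [outwardTail, mem_uIoc, h, h.not_ge, Ici_def]

theorem outwardTail_eq_zero_of_notMem {μ : Measure α} {s : Set α} [OrdConnected s]
    (hμ : ∀ᵐ x ∂μ, x ∈ s) {c t : α} (hc : c ∈ s) (ht : t ∉ s) : outwardTail μ c t = 0 :=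
  measure_mono_null
    (fun _ htx hx => ht (OrdConnected.uIoc_subset inferInstance hc hx htx)) hμ

variable [TopologicalSpace α] [OrderClosedTopology α] [OpensMeasurableSpace α]

theorem toReal_outwardTail (μ : Measure α) [IsProbabilityMeasure μ] (c t : α) :
    (outwardTail μ c t).toReal = if t ≤ c then μ.real (Iio t) else 1 - μ.real (Iio t) := by
  split_ifs with h
  · rw [outwardTail_of_le μ h, measureReal_def]
  · rw [outwardTail_of_lt μ (not_le.mp h), ← measureReal_def, ← compl_Iio,
      probReal_compl_eq_one_sub measurableSet_Iio]

variable [SecondCountableTopology α]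

theorem measurableSet_setOf_snd_mem_uIoc_fst (c : α) :
    MeasurableSet {p : α × α | p.2 ∈ Ι c p.1} := by
  simp only [mem_uIoc, measurableSet_setOfPred]
  fun_prop

theorem lintegral_lintegral_uIoc_eq_lintegral_outwardTail_mul (μ ν : Measure α) [SFinite μ]
    [SFinite ν] {g : α → ℝ≥0∞} (hg : AEMeasurable g ν) (c : α) :
    ∫⁻ x, ∫⁻ t in Ι c x, g t ∂ν ∂μ = ∫⁻ t, outwardTail μ c t * g t ∂ν := by
  have hS := measurableSet_setOf_snd_mem_uIoc_fst c
  calc ∫⁻ x, ∫⁻ t in Ι c x, g t ∂ν ∂μ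
      = ∫⁻ x, ∫⁻ t, {p : α × α | p.2 ∈ Ι c p.1}.indicator (fun p => g p.2) (x, t) ∂ν ∂μ :=
        lintegral_congr fun x => (lintegral_indicator measurableSet_uIoc g).symm
    _ = ∫⁻ t, ∫⁻ x, {x | t ∈ Ι c x}.indicator (fun _ => g t) x ∂μ ∂ν :=
        lintegral_lintegral_swap (hg.comp_snd.indicator hS)
    _ = ∫⁻ t, outwardTail μ c t * g t ∂ν :=
        lintegral_congr fun t =>
          (lintegral_indicator_const (hS.preimage measurable_prodMk_right) (g t)).trans
            (mul_comm _ _)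

end OutwardTail

section AbsolutelyContinuous

variable {φ : ℝ → ℝ} {c : ℝ}

theorem enorm_sub_le_lintegral_enorm_deriv {x : ℝ} (hφ : AbsolutelyContinuousOnInterval φ c x) :
    ‖φ x - φ c‖ₑ ≤ ∫⁻ t in Ι c x, ‖deriv φ t‖ₑ := by
  have h : ‖φ x - φ c‖ = ‖∫ t in Ι c x, deriv φ t‖ := by
    rw [← hφ.integral_deriv_eq_sub, intervalIntegral.norm_intervalIntegral_eq]
  rw [enorm_eq_iff_norm_eq.mpr h]
  exact enorm_integral_le_lintegral_enorm _

theorem continuousOn_of_absolutelyContinuousOnInterval {E : Type*}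
    [SeminormedAddCommGroup E] {u : ℝ → E} {s : Set ℝ} (hs : IsOpen s)
    (hu : ∀ a ∈ s, ∀ b ∈ s, AbsolutelyContinuousOnInterval u a b) : ContinuousOn u s := by
  refine continuousOn_of_forall_continuousAt fun x hx => ?_
  obtain ⟨a, b, hxab, hab_nhds, hab⟩ := exists_Icc_mem_subset_of_mem_nhds (hs.mem_nhds hx)
  have hle : a ≤ b := hxab.1.trans hxab.2
  have hcont := (hu a (hab (left_mem_Icc.mpr hle)) b (hab (right_mem_Icc.mpr hle))).continuousOn
  exact hcont.continuousAt (uIcc_of_le hle ▸ hab_nhds)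

theorem absolutelyContinuousOnInterval_of_contDiffOn {E : Type*} [NormedAddCommGroup E]
    [NormedSpace ℝ E] {u : ℝ → E} {s : Set ℝ} [OrdConnected s] (hu : ContDiffOn ℝ 1 u s) :
    ∀ a ∈ s, ∀ b ∈ s, AbsolutelyContinuousOnInterval u a b := fun _ ha _ hb =>
  (hu.mono (OrdConnected.uIcc_subset inferInstance ha hb)).absolutelyContinuousOnInterval

theorem lintegral_enorm_sub_le_lintegral_outwardTail_mul {μ : Measure ℝ} [SFinite μ]
    (hφ : ∀ᵐ x ∂μ, AbsolutelyContinuousOnInterval φ c x) :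
    ∫⁻ x, ‖φ x - φ c‖ₑ ∂μ ≤ ∫⁻ t, outwardTail μ c t * ‖deriv φ t‖ₑ :=
  calc ∫⁻ x, ‖φ x - φ c‖ₑ ∂μ
      ≤ ∫⁻ x, (∫⁻ t in Ι c x, ‖deriv φ t‖ₑ) ∂μ :=
        lintegral_mono_ae (hφ.mono fun _ => enorm_sub_le_lintegral_enorm_deriv)
    _ = ∫⁻ t, outwardTail μ c t * ‖deriv φ t‖ₑ :=
        lintegral_lintegral_uIoc_eq_lintegral_outwardTail_mul μ volume
          (measurable_deriv φ).enorm.aemeasurable c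

theorem lintegral_enorm_sub_le_setLIntegral_outwardTail_mul {μ : Measure ℝ} [SFinite μ]
    {s : Set ℝ} [OrdConnected s] (hμ : ∀ᵐ x ∂μ, x ∈ s) (hc : c ∈ s)
    (hφ : ∀ x ∈ s, AbsolutelyContinuousOnInterval φ c x) :
    ∫⁻ x, ‖φ x - φ c‖ₑ ∂μ ≤ ∫⁻ t in s, outwardTail μ c t * ‖deriv φ t‖ₑ := by
  rw [setLIntegral_eq_of_support_subset]
  · exact lintegral_enorm_sub_le_lintegral_outwardTail_mul (hμ.mono hφ)
  · intro t ht
    by_contra hts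
    exact ht (mul_eq_zero_of_left (outwardTail_eq_zero_of_notMem hμ hc hts) _)

end AbsolutelyContinuous

section Density

variable {α : Type*} [MeasurableSpace α] {μ : Measure α}

theorem measureReal_withDensity_ofReal {f : α → ℝ} (hf : AEStronglyMeasurable f μ)
    (hf0 : 0 ≤ᵐ[μ] f) {s : Set α} (hs : MeasurableSet s) :
    (μ.withDensity fun x => ENNReal.ofReal (f x)).real s = ∫ x in s, f x ∂μ := by
  rw [measureReal_def, withDensity_apply _ hs,
    integral_eq_lintegral_of_nonneg_ae (ae_restrict_of_ae hf0) hf.restrict]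

theorem isProbabilityMeasure_withDensity_ofReal {f : α → ℝ} (hf0 : 0 ≤ᵐ[μ] f)
    (hf : ∫ x, f x ∂μ = 1) :
    IsProbabilityMeasure (μ.withDensity fun x => ENNReal.ofReal (f x)) where
  measure_univ := by
    rw [withDensity_apply _ .univ, Measure.restrict_univ,
      ← ofReal_integral_eq_lintegral_ofReal (integrable_of_integral_eq_one hf) hf0, hf,
      ENNReal.ofReal_one]

theorem lintegral_withDensity_ofReal_enorm {E : Type*} [NormedAddCommGroup E] [NormedSpace ℝ E]
    {f : α → ℝ} (hf : AEMeasurable f μ) (hf0 : 0 ≤ᵐ[μ] f) (u : α → E) :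
    ∫⁻ x, ‖u x‖ₑ ∂μ.withDensity (fun x => ENNReal.ofReal (f x)) = ∫⁻ x, ‖f x • u x‖ₑ ∂μ := by
  rw [lintegral_withDensity_eq_lintegral_mul_non_measurable₀ μ hf.ennreal_ofReal
    (ae_of_all _ fun _ => ENNReal.ofReal_lt_top)]
  refine lintegral_congr_ae (hf0.mono fun x hx => ?_)
  simp only [Pi.mul_apply, enorm_smul, Real.enorm_of_nonneg hx]

theorem integrable_and_integral_le_of_lintegral_enorm_le {u v : α → ℝ}
    (hu : AEStronglyMeasurable u μ) (hv : Integrable v μ) (hv0 : 0 ≤ᵐ[μ] v)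
    (huv : ∫⁻ x, ‖u x‖ₑ ∂μ ≤ ∫⁻ x, ‖v x‖ₑ ∂μ) :
    Integrable u μ ∧ ∫ x, u x ∂μ ≤ ∫ x, v x ∂μ := by
  refine ⟨⟨hu, huv.trans_lt hv.2⟩, ?_⟩
  calc ∫ x, u x ∂μ
      ≤ ∫ x, ‖u x‖ ∂μ := (le_abs_self _).trans (norm_integral_le_integral_norm u)
    _ = (∫⁻ x, ‖u x‖ₑ ∂μ).toReal := integral_norm_eq_lintegral_enorm hu
    _ ≤ (∫⁻ x, ‖v x‖ₑ ∂μ).toReal := ENNReal.toReal_mono hv.2.ne huv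
    _ = ∫ x, ‖v x‖ ∂μ := (integral_norm_eq_lintegral_enorm hv.1).symm
    _ = ∫ x, v x ∂μ := integral_congr_ae (hv0.mono fun _ => Real.norm_of_nonneg)

end Density

section ERealInterval

variable (a b : EReal)

theorem isOpen_setOf_lt_coe_lt : IsOpen {x : ℝ | a < x ∧ x < b} :=
  isOpen_Ioo.preimage continuous_coe_real_ereal

theorem ordConnected_setOf_lt_coe_lt : OrdConnected {x : ℝ | a < x ∧ x < b} :=
  ordConnected_Ioo.preimage_mono EReal.coe_strictMono.monotone

end ERealInterval

theorem wirtinger_with_weight_p_one_general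
    {I : Set ℝ} (hIo : IsOpen I) [OrdConnected I]
    {f : ℝ → ℝ} (hfpos : ∀ x ∈ I, 0 < f x) (hfprob : ∫ x in I, f x = 1)
    {F : ℝ → ℝ} (hF : ∀ x, F x = ∫ y in I ∩ Iio x, f y) {c : ℝ} (hc : c ∈ I)
    {K : ℝ → ℝ} (hK : ∀ x, K x = if x ≤ c then F x / f x else (1 - F x) / f x)
    {φ : ℝ → ℝ} (hφ : ∀ a ∈ I, ∀ b ∈ I, AbsolutelyContinuousOnInterval φ a b)
    (hrhs : IntegrableOn (fun x => K x * |deriv φ x| * f x) I) :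
    IntegrableOn (fun x => |φ x - φ c| * f x) I ∧
      ∫ x in I, |φ x - φ c| * f x ≤ ∫ x in I, K x * |deriv φ x| * f x := by
  have hI : MeasurableSet I := hIo.measurableSet
  have hfint : IntegrableOn f I := integrable_of_integral_eq_one hfprob
  have hf0 : 0 ≤ᵐ[volume.restrict I] f :=
    (ae_restrict_mem hI).mono fun x hx => (hfpos x hx).le
  let μ := (volume.restrict I).withDensity fun x => ENNReal.ofReal (f x)
  have : IsProbabilityMeasure μ := isProbabilityMeasure_withDensity_ofReal hf0 hfprob
  have hμI : ∀ᵐ x ∂μ, x ∈ I := withDensity_absolutelyContinuous _ _ (ae_restrict_mem hI)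
  have hcdf (t : ℝ) : μ.real (Iio t) = F t := by
    rw [hF, inter_comm, ← Measure.restrict_restrict measurableSet_Iio]
    exact measureReal_withDensity_ofReal hfint.aestronglyMeasurable hf0 measurableSet_Iio
  have hKf : ∀ t ∈ I, K t * f t = (outwardTail μ c t).toReal := fun t ht => by
    rw [hK, toReal_outwardTail, hcdf, ← ite_div, div_mul_cancel₀ _ (hfpos t ht).ne']
  have hrhs0 : 0 ≤ᵐ[volume.restrict I] fun t => K t * |deriv φ t| * f t :=
    (ae_restrict_mem hI).mono fun t ht => by
      simp only [Pi.zero_apply, mul_right_comm, hKf t ht]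
      positivity
  have hφm : AEStronglyMeasurable (fun x => |φ x - φ c| * f x) (volume.restrict I) := by
    have hφcont := continuousOn_of_absolutelyContinuousOnInterval hIo hφ
    exact ((hφcont.sub continuousOn_const).abs.aestronglyMeasurable hI).mul
      hfint.aestronglyMeasurable
  refine integrable_and_integral_le_of_lintegral_enorm_le hφm hrhs hrhs0 ?_
  calc ∫⁻ x in I, ‖|φ x - φ c| * f x‖ₑ
      = ∫⁻ x, ‖φ x - φ c‖ₑ ∂μ := by
        rw [lintegral_withDensity_ofReal_enorm hfint.aemeasurable hf0]
        simp only [smul_eq_mul, enorm_mul, Real.enorm_abs, mul_comm]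
    _ ≤ ∫⁻ t in I, outwardTail μ c t * ‖deriv φ t‖ₑ :=
        lintegral_enorm_sub_le_setLIntegral_outwardTail_mul hμI hc (hφ c hc)
    _ = ∫⁻ t in I, ‖K t * |deriv φ t| * f t‖ₑ := setLIntegral_congr_fun hI fun t ht => by
        have htail : outwardTail μ c t ≠ ∞ := measure_ne_top μ _
        simp only [mul_right_comm, hKf t ht, enorm_mul, Real.enorm_abs, Real.enorm_toReal htail]

/-- **Wirtinger-type inequality with weight, case `p = 1`** (inequality (4.8)).
Let `X` have an absolutely continuous density `f > 0` on the open interval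
`I = (ia, ib) ⊆ ℝ`, with distribution function `F`, median `xbar`
(`F(xbar) = 1/2`), and weight `K(x) = F(x)/f(x)` for `x ≤ xbar`,
`K(x) = (1−F(x))/f(x)` for `x ≥ xbar`. Then for every smooth `φ` on `I` with
`φ(xbar) = 0` and `E[|φ(X)|]` finite,
`E[|φ(X)|] ≤ E[K(X) |φ'(X)|]` (whenever the right-hand side is finite). -/
theorem wirtinger_with_weight_p_one
    (ia ib : EReal) (hii : ia < ib)
    (I : Set ℝ) (hI : I = {x : ℝ | ia < (x : EReal) ∧ (x : EReal) < ib})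
    (f : ℝ → ℝ) (hfcont : ContinuousOn f I) (hfpos : ∀ x ∈ I, 0 < f x)
    (hfprob : ∫ x in I, f x = 1)
    (F : ℝ → ℝ) (hF : ∀ x, F x = ∫ y in I ∩ Iio x, f y)
    (xbar : ℝ) (hxbar : xbar ∈ I) (hmedian : F xbar = 1 / 2)
    (K : ℝ → ℝ) (hK : ∀ x, K x = if x ≤ xbar then F x / f x else (1 - F x) / f x)
    (φ : ℝ → ℝ) (hφ : ContDiffOn ℝ (⊤ : ℕ∞) φ I) (hφ0 : φ xbar = 0)
    (hlhs : IntegrableOn (fun x => |φ x| * f x) I)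
    (hrhs : IntegrableOn (fun x => K x * |deriv φ x| * f x) I) :
    (∫ x in I, |φ x| * f x) ≤ ∫ x in I, K x * |deriv φ x| * f x := by
  subst hI
  have := ordConnected_setOf_lt_coe_lt ia ib
  simpa only [hφ0, sub_zero] using (wirtinger_with_weight_p_one_general
    (isOpen_setOf_lt_coe_lt ia ib) hfpos hfprob hF hxbar hK
    (absolutelyContinuousOnInterval_of_contDiffOn (hφ.of_le (by simp))) hrhs).2
end
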